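/- arXiv:math/0610769 — 4 statements merged into one kernel-verified Lean document; each statement's English description precedes it below -/
import Mathlib

section
/- Let α = (α_1,…,α_d) be a multi-index with α_i ∈ (0,2]∖{1} and δ = (δ_1,…,δ_d) with |δ_i| ≤ min(α_i, 2−α_i), and fix t > 0. Then the function ξ ↦ ψ_{α,ξ}(t) is Lebesgue integrable on ℝ^d, the Green function 𝐆_{α,δ}(t,x) := (2π)^{−d} ∫_{ℝ^d} exp(−i⟨ξ,x⟩) ψ_{α,ξ}(t) dξ is Lebesgue integrable in x on ℝ^d, and its Fourier transform recovers ψ: ∫_{ℝ^d} exp(i⟨ξ,x⟩) 𝐆_{α,δ}(t,x) dx = ψ_{α,ξ}(t) for every ξ ∈ ℝ^d. -/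
open MeasureTheory

/-- `ψ_{α,ξ}(t) = exp(−t ∑ i |ξ_i|^{α_i} exp(−i δ_i (π/2) sgn(ξ_i)))`. -/
noncomputable def psi {d : ℕ} (α δ : Fin d → ℝ) (ξ : Fin d → ℝ) (t : ℝ) : ℂ :=
  Complex.exp (-(t : ℂ) * ∑ i, ((|ξ i| ^ (α i) : ℝ) : ℂ) *
    Complex.exp (-(Complex.I * (δ i : ℝ) * ((Real.pi / 2 : ℝ) : ℂ) *
      ((Real.sign (ξ i) : ℝ) : ℂ))))

/-- The Green function `𝐆_{α,δ}(t,x) = (2π)^{-d} ∫ exp(−i⟨ξ,x⟩) ψ_{α,ξ}(t) dξ`. -/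
noncomputable def Gd {d : ℕ} (α δ : Fin d → ℝ) (t : ℝ) (x : Fin d → ℝ) : ℂ :=
  (((2 * Real.pi) ^ d : ℝ)⁻¹ : ℝ) • ∫ ξ : Fin d → ℝ,
    Complex.exp (-(Complex.I * ((∑ i, ξ i * x i : ℝ) : ℂ))) * psi α δ ξ t

/-!
In each coordinate `ψ` is a complex stretched exponential `exp (-a |ξ| ^ p)` on either half-line,
with `0 < a.re`, and both `ψ` and the phase factorize over the coordinates. So everything reduces to
Fourier inversion on the line, which only needs the transform of one factor to be integrable.

Integrating by parts once on each half-line, the boundary terms at the origin cancel, and what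
remains is `|ω|⁻¹` times oscillatory integrals of `x ^ (p - 1) exp (-a x ^ p)`. Splitting these at
the scale `|ω|⁻¹` and integrating by parts above it gives `O(|ω| ^ (-β))` for every `0 < β < 1` with
`β ≤ p`, hence a transform of order `|ω| ^ (-1 - β)`.
-/

open Set Filter Topology Asymptotics Complex FourierTransform

section OscillatoryIntegral

variable {E : Type*} [NormedAddCommGroup E] [NormedSpace ℂ E]

theorem norm_exp_mul_I_smul (ω x : ℝ) (v : E) : ‖cexp ((ω * x : ℝ) * I) • v‖ = ‖v‖ := by
  rw [norm_smul, norm_exp_ofReal_mul_I, one_mul]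

theorem hasDerivAt_exp_mul_I (ω x : ℝ) :
    HasDerivAt (fun y : ℝ => cexp ((ω * y : ℝ) * I)) (cexp ((ω * x : ℝ) * I) * (ω * I)) x := by
  simpa using ((hasDerivAt_id x).const_mul ω).ofReal_comp.mul_const I |>.cexp

theorem integrableOn_exp_mul_I_smul {f : ℝ → E} {s : Set ℝ} (hf : IntegrableOn f s) (ω : ℝ) :
    IntegrableOn (fun x => cexp ((ω * x : ℝ) * I) • f x) s :=
  hf.bdd_smul 1 (by fun_prop) (ae_of_all _ fun x => (norm_exp_ofReal_mul_I _).le)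

theorem mul_I_smul_integral_Ioi_exp_smul [CompleteSpace E] {f f' : ℝ → E} {a : ℝ}
    (hcont : ContinuousWithinAt f (Ici a) a) (hderiv : ∀ x ∈ Ioi a, HasDerivAt f (f' x) x)
    (hf : IntegrableOn f (Ioi a)) (hf' : IntegrableOn f' (Ioi a)) (ω : ℝ) :
    (ω * I) • ∫ x in Ioi a, cexp ((ω * x : ℝ) * I) • f x =
      -(cexp ((ω * a : ℝ) * I) • f a) - ∫ x in Ioi a, cexp ((ω * x : ℝ) * I) • f' x := by
  have hef := integrableOn_exp_mul_I_smul hf ω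
  have hef' := integrableOn_exp_mul_I_smul hf' ω
  have hlim : Tendsto (fun x => cexp ((ω * x : ℝ) * I) • f x) atTop (𝓝 0) := by
    rw [tendsto_zero_iff_norm_tendsto_zero]
    simpa only [norm_exp_mul_I_smul, norm_zero] using
      (tendsto_zero_of_hasDerivAt_of_integrableOn_Ioi hderiv hf' hf).norm
  have hprod : ∀ x ∈ Ioi a, HasDerivAt (fun x => cexp ((ω * x : ℝ) * I) • f x)
      (cexp ((ω * x : ℝ) * I) • f' x + (ω * I) • cexp ((ω * x : ℝ) * I) • f x) x := fun x hx => by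
    convert! (hasDerivAt_exp_mul_I ω x).smul (hderiv x hx) using 2
    rw [smul_smul, mul_comm]
  have hFTC := integral_Ioi_of_hasDerivAt_of_tendsto
    (ContinuousWithinAt.smul (by fun_prop) hcont) hprod (hef'.add (hef.smul (ω * I))) hlim
  rw [zero_sub, integral_add hef' (by exact hef.smul (ω * I)), integral_smul] at hFTC
  exact eq_sub_of_add_eq' hFTC

end OscillatoryIntegral

section PowerBounds

variable {E : Type*} [NormedAddCommGroup E]

theorem integrableOn_Ioi_of_norm_le_rpow {f : ℝ → E} {s r B : ℝ} (hs : s < -1) (hr : 0 < r)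
    (hmeas : AEStronglyMeasurable f (volume.restrict (Ioi r)))
    (hf : ∀ x ∈ Ioi r, ‖f x‖ ≤ B * x ^ s) : IntegrableOn f (Ioi r) :=
  ((integrableOn_Ioi_rpow_of_lt hs hr).const_mul B).mono' hmeas
    ((ae_restrict_mem measurableSet_Ioi).mono hf)

variable [NormedSpace ℝ E]

theorem norm_integral_Ioc_le_of_norm_le_rpow {f : ℝ → E} {s r A : ℝ} (hs : -1 < s) (hr : 0 ≤ r)
    (hf : ∀ x ∈ Ioc 0 r, ‖f x‖ ≤ A * x ^ s) :
    ‖∫ x in Ioc 0 r, f x‖ ≤ A * (r ^ (s + 1) / (s + 1)) := by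
  have hint : IntegrableOn (fun x : ℝ => x ^ s) (Ioc 0 r) :=
    (intervalIntegrable_iff_integrableOn_Ioc_of_le hr).1
      (intervalIntegral.intervalIntegrable_rpow' hs)
  calc ‖∫ x in Ioc 0 r, f x‖ ≤ ∫ x in Ioc 0 r, A * x ^ s :=
        norm_integral_le_of_norm_le (hint.const_mul A) ((ae_restrict_mem measurableSet_Ioc).mono hf)
    _ = A * (r ^ (s + 1) / (s + 1)) := by
        rw [integral_const_mul, ← intervalIntegral.integral_of_le hr, integral_rpow (Or.inl hs),
          Real.zero_rpow (by linarith), sub_zero]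

theorem norm_integral_Ioi_le_of_norm_le_rpow {f : ℝ → E} {s r B : ℝ} (hs : s < -1) (hr : 0 < r)
    (hf : ∀ x ∈ Ioi r, ‖f x‖ ≤ B * x ^ s) :
    ‖∫ x in Ioi r, f x‖ ≤ B * (-r ^ (s + 1) / (s + 1)) := by
  rw [← integral_Ioi_rpow_of_lt hs hr, ← integral_const_mul]
  exact norm_integral_le_of_norm_le ((integrableOn_Ioi_rpow_of_lt hs hr).const_mul B)
    ((ae_restrict_mem measurableSet_Ioi).mono hf)

end PowerBounds

section Decay

variable {E : Type*} [NormedAddCommGroup E] [NormedSpace ℂ E] [CompleteSpace E]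
  {g g' : ℝ → E} {A B β r : ℝ}

theorem abs_mul_norm_integral_Ioi_exp_smul_le (hβ : β < 1) (hr : 0 < r)
    (hint : IntegrableOn g (Ioi 0)) (hderiv : ∀ x ∈ Ioi 0, HasDerivAt g (g' x) x)
    (hg : ∀ x ∈ Ioi 0, ‖g x‖ ≤ A * x ^ (β - 1)) (hg' : ∀ x ∈ Ioi 0, ‖g' x‖ ≤ B * x ^ (β - 2))
    (ω : ℝ) :
    |ω| * ‖∫ x in Ioi r, cexp ((ω * x : ℝ) * I) • g x‖ ≤
      A * r ^ (β - 1) + B * (r ^ (β - 1) / (1 - β)) := by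
  have hsub : Ioi r ⊆ Ioi 0 := Ioi_subset_Ioi hr.le
  have hmeas : AEStronglyMeasurable g' (volume.restrict (Ioi r)) :=
    (aestronglyMeasurable_deriv g _).congr
      ((ae_restrict_mem measurableSet_Ioi).mono fun x hx => (hderiv x (hsub hx)).deriv)
  have hint' : IntegrableOn g' (Ioi r) :=
    integrableOn_Ioi_of_norm_le_rpow (by linarith) hr hmeas fun x hx => hg' x (hsub hx)
  have htail : ‖∫ x in Ioi r, cexp ((ω * x : ℝ) * I) • g' x‖ ≤ B * (r ^ (β - 1) / (1 - β)) := by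
    convert norm_integral_Ioi_le_of_norm_le_rpow (s := β - 2) (by linarith) hr
      fun x hx => (norm_exp_mul_I_smul ω x (g' x)).trans_le (hg' x (hsub hx)) using 2
    rw [← neg_div_neg_eq]
    ring_nf
  calc |ω| * ‖∫ x in Ioi r, cexp ((ω * x : ℝ) * I) • g x‖
      = ‖(ω * I) • ∫ x in Ioi r, cexp ((ω * x : ℝ) * I) • g x‖ := by
        rw [norm_smul, norm_mul, norm_I, mul_one, norm_real, Real.norm_eq_abs]
    _ = ‖-(cexp ((ω * r : ℝ) * I) • g r) - ∫ x in Ioi r, cexp ((ω * x : ℝ) * I) • g' x‖ := by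
        rw [mul_I_smul_integral_Ioi_exp_smul
          (hderiv r hr).continuousAt.continuousWithinAt (fun x hx => hderiv x (hsub hx))
          (hint.mono_set hsub) hint']
    _ ≤ ‖g r‖ + ‖∫ x in Ioi r, cexp ((ω * x : ℝ) * I) • g' x‖ := by
        simpa only [norm_neg, norm_exp_mul_I_smul] using
          norm_sub_le (-(cexp ((ω * r : ℝ) * I) • g r)) _
    _ ≤ A * r ^ (β - 1) + B * (r ^ (β - 1) / (1 - β)) := add_le_add (hg r hr) htail

-- Below the scale `|ω|⁻¹` there is no cancellation to exploit; above it one integrates by parts.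
theorem norm_integral_Ioi_exp_smul_le (hβ₀ : 0 < β) (hβ₁ : β < 1)
    (hint : IntegrableOn g (Ioi 0)) (hderiv : ∀ x ∈ Ioi 0, HasDerivAt g (g' x) x)
    (hg : ∀ x ∈ Ioi 0, ‖g x‖ ≤ A * x ^ (β - 1)) (hg' : ∀ x ∈ Ioi 0, ‖g' x‖ ≤ B * x ^ (β - 2))
    {ω : ℝ} (hω : ω ≠ 0) :
    ‖∫ x in Ioi 0, cexp ((ω * x : ℝ) * I) • g x‖ ≤ (A / β + A + B / (1 - β)) * |ω| ^ (-β) := by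
  have hω' : 0 < |ω| := abs_pos.2 hω
  set r : ℝ := |ω|⁻¹ with hr_def
  have hr : 0 < r := inv_pos.2 hω'
  have hpow : |ω| ^ (-β) = r ^ β := by rw [Real.rpow_neg hω'.le, hr_def, Real.inv_rpow hω'.le]
  have hhead : ‖∫ x in Ioc 0 r, cexp ((ω * x : ℝ) * I) • g x‖ ≤ A * (r ^ β / β) := by
    simpa using norm_integral_Ioc_le_of_norm_le_rpow (s := β - 1) (by linarith) hr.le
      fun x hx => (norm_exp_mul_I_smul ω x (g x)).trans_le (hg x hx.1)
  have htail : ‖∫ x in Ioi r, cexp ((ω * x : ℝ) * I) • g x‖ ≤ (A + B / (1 - β)) * r ^ β := by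
    refine le_of_mul_le_mul_left
      ((abs_mul_norm_integral_Ioi_exp_smul_le hβ₁ hr hint hderiv hg hg' ω).trans_eq ?_) hω'
    rw [Real.rpow_sub_one hr.ne', hr_def, div_inv_eq_mul]
    ring
  have hint_exp := integrableOn_exp_mul_I_smul hint ω
  rw [hpow, ← Ioc_union_Ioi_eq_Ioi hr.le, setIntegral_union Ioc_disjoint_Ioi_same measurableSet_Ioi
    (hint_exp.mono_set Ioc_subset_Ioi_self) (hint_exp.mono_set (Ioi_subset_Ioi hr.le))]
  calc _ ≤ A * (r ^ β / β) + (A + B / (1 - β)) * r ^ β := norm_add_le_of_le hhead htail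
    _ = (A / β + A + B / (1 - β)) * r ^ β := by ring

end Decay

section StretchedExponential

variable {a : ℂ} {p : ℝ}

/-- The complex stretched exponential `x ↦ exp (-a x ^ p)`, of interest on the half-line `0 ≤ x`;
at negative `x` it inherits the conventions of `Real.rpow`. -/
noncomputable def stretchedExp (a : ℂ) (p x : ℝ) : ℂ := cexp (-(a * (x ^ p : ℝ)))

theorem stretchedExp_zero (hp : p ≠ 0) : stretchedExp a p 0 = 1 := by
  simp [stretchedExp, Real.zero_rpow hp]

theorem norm_stretchedExp (a : ℂ) (p x : ℝ) :
    ‖stretchedExp a p x‖ = Real.exp (-a.re * x ^ p) := by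
  rw [stretchedExp, norm_exp, neg_re, re_mul_ofReal, neg_mul]

theorem norm_rpow_smul_stretchedExp (a : ℂ) (p s : ℝ) {x : ℝ} (hx : 0 ≤ x) :
    ‖x ^ s • stretchedExp a p x‖ = x ^ s * Real.exp (-a.re * x ^ p) := by
  rw [norm_smul, norm_stretchedExp, Real.norm_of_nonneg (Real.rpow_nonneg hx s)]

theorem continuous_stretchedExp (a : ℂ) (hp : 0 ≤ p) : Continuous (stretchedExp a p) := by
  have := Real.continuous_rpow_const hp
  unfold stretchedExp
  fun_prop

theorem hasDerivAt_stretchedExp (a : ℂ) (p : ℝ) {x : ℝ} (hx : x ≠ 0) :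
    HasDerivAt (stretchedExp a p) (-(a * p) * x ^ (p - 1) • stretchedExp a p x) x := by
  have hexponent : HasDerivAt (fun y : ℝ => -(a * (y ^ p : ℝ))) (-(a * (p * x ^ (p - 1) : ℝ))) x :=
    ((Real.hasDerivAt_rpow_const (Or.inl hx)).ofReal_comp.const_mul a).neg
  convert! hexponent.cexp using 1
  rw [stretchedExp, real_smul]
  push_cast
  ring

theorem hasDerivAt_rpow_smul_stretchedExp (a : ℂ) (p s : ℝ) {x : ℝ} (hx : 0 < x) :
    HasDerivAt (fun y => y ^ s • stretchedExp a p y)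
      (s * x ^ (s - 1) • stretchedExp a p x - a * p * x ^ (s + p - 1) • stretchedExp a p x) x := by
  convert! (Real.hasDerivAt_rpow_const (p := s) (Or.inl hx.ne')).smul
    (hasDerivAt_stretchedExp a p hx.ne') using 1
  rw [add_sub_assoc, Real.rpow_add hx]
  simp only [real_smul]
  push_cast
  ring

theorem integrableOn_rpow_smul_stretchedExp {s : ℝ} (ha : 0 < a.re) (hp : 0 < p) (hs : -1 < s) :
    IntegrableOn (fun x => x ^ s • stretchedExp a p x) (Ioi 0) := by
  have hmeas : Measurable fun x : ℝ => x ^ s • stretchedExp a p x :=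
    (measurable_id.pow_const s).smul (continuous_stretchedExp a hp.le).measurable
  refine (integrableOn_rpow_mul_exp_neg_mul_rpow hs hp ha).mono' hmeas.aestronglyMeasurable ?_
  filter_upwards [ae_restrict_mem measurableSet_Ioi] with x hx
  exact (norm_rpow_smul_stretchedExp a p s (le_of_lt hx)).le

theorem integrableOn_stretchedExp (ha : 0 < a.re) (hp : 0 < p) :
    IntegrableOn (stretchedExp a p) (Ioi 0) := by
  simpa using integrableOn_rpow_smul_stretchedExp (s := 0) ha hp (by norm_num)

theorem exists_rpow_mul_exp_neg_mul_rpow_le {b q s : ℝ} (hb : 0 < b) (hp : 0 < p) (hqs : q ≤ s) :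
    ∃ C, ∀ x : ℝ, 0 < x → x ^ s * Real.exp (-b * x ^ p) ≤ C * x ^ q := by
  set u := (s - q) / p
  have hu : 0 ≤ u := div_nonneg (sub_nonneg.2 hqs) hp.le
  refine ⟨(u / b) ^ u, fun x hx => ?_⟩
  have hbound : x ^ (s - q) ≤ (u / b) ^ u * Real.exp (b * x ^ p) := by
    have h := ProbabilityTheory.rpow_abs_le_mul_exp_abs (x ^ p) hu hb.ne'
    rwa [abs_of_pos hb, abs_of_pos (Real.rpow_pos_of_pos hx p), ← Real.rpow_mul hx.le,
      mul_div_cancel₀ _ hp.ne'] at h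
  calc x ^ s * Real.exp (-b * x ^ p) = x ^ (s - q) * Real.exp (-b * x ^ p) * x ^ q := by
        rw [mul_right_comm, ← Real.rpow_add hx, sub_add_cancel]
    _ ≤ (u / b) ^ u * Real.exp (b * x ^ p) * Real.exp (-b * x ^ p) * x ^ q := by gcongr
    _ = (u / b) ^ u * x ^ q := by
        rw [mul_assoc (_ ^ u), ← Real.exp_add, neg_mul, add_neg_cancel, Real.exp_zero, mul_one]

theorem exists_norm_rpow_smul_stretchedExp_le {q s : ℝ} (ha : 0 < a.re) (hp : 0 < p)
    (hqs : q ≤ s) :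
    ∃ C, ∀ x ∈ Ioi 0, ‖x ^ s • stretchedExp a p x‖ ≤ C * x ^ q := by
  obtain ⟨C, h⟩ := exists_rpow_mul_exp_neg_mul_rpow_le ha hp hqs
  exact ⟨C, fun x hx => (norm_rpow_smul_stretchedExp a p s (le_of_lt hx)).trans_le (h x hx)⟩

theorem exists_norm_integral_exp_smul_rpow_smul_stretchedExp_le {β s : ℝ} (ha : 0 < a.re)
    (hp : 0 < p) (hβ₀ : 0 < β) (hβ₁ : β < 1) (hs : β - 1 ≤ s) :
    ∃ C, ∀ ω : ℝ, ω ≠ 0 →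
      ‖∫ x in Ioi 0, cexp ((ω * x : ℝ) * I) • x ^ s • stretchedExp a p x‖ ≤ C * |ω| ^ (-β) := by
  obtain ⟨A, hA⟩ := exists_norm_rpow_smul_stretchedExp_le ha hp hs
  obtain ⟨B₁, hB₁⟩ :=
    exists_norm_rpow_smul_stretchedExp_le (q := β - 2) (s := s - 1) ha hp (by linarith)
  obtain ⟨B₂, hB₂⟩ :=
    exists_norm_rpow_smul_stretchedExp_le (q := β - 2) (s := s + p - 1) ha hp (by linarith)
  refine ⟨_, fun ω hω => norm_integral_Ioi_exp_smul_le (B := |s| * B₁ + ‖a * p‖ * B₂) hβ₀ hβ₁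
    (integrableOn_rpow_smul_stretchedExp ha hp (by linarith))
    (fun x hx => hasDerivAt_rpow_smul_stretchedExp a p s hx) hA (fun x hx => ?_) hω⟩
  calc _ ≤ |s| * ‖x ^ (s - 1) • stretchedExp a p x‖ +
          ‖a * p‖ * ‖x ^ (s + p - 1) • stretchedExp a p x‖ := by
        simpa only [norm_mul, norm_real, Real.norm_eq_abs] using
          norm_sub_le ((s : ℂ) * x ^ (s - 1) • stretchedExp a p x)
            (a * p * x ^ (s + p - 1) • stretchedExp a p x)
    _ ≤ |s| * (B₁ * x ^ (β - 2)) + ‖a * p‖ * (B₂ * x ^ (β - 2)) := by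
        gcongr
        exacts [hB₁ x hx, hB₂ x hx]
    _ = (|s| * B₁ + ‖a * p‖ * B₂) * x ^ (β - 2) := by ring

theorem exists_norm_mul_I_mul_integral_exp_smul_stretchedExp_add_one_le {β : ℝ} (ha : 0 < a.re)
    (hp : 0 < p) (hβ₀ : 0 < β) (hβ₁ : β < 1) (hβp : β ≤ p) :
    ∃ C, ∀ ω : ℝ, ω ≠ 0 →
      ‖ω * I * (∫ x in Ioi 0, cexp ((ω * x : ℝ) * I) • stretchedExp a p x) + 1‖ ≤
        C * |ω| ^ (-β) := by
  obtain ⟨C, hC⟩ := exists_norm_integral_exp_smul_rpow_smul_stretchedExp_le (s := p - 1) ha hp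
    hβ₀ hβ₁ (by linarith)
  refine ⟨‖a * p‖ * C, fun ω hω => ?_⟩
  have hparts := mul_I_smul_integral_Ioi_exp_smul
    (continuous_stretchedExp a hp.le).continuousWithinAt
    (fun x hx => hasDerivAt_stretchedExp a p (ne_of_gt hx)) (integrableOn_stretchedExp ha hp)
    ((integrableOn_rpow_smul_stretchedExp ha hp (by linarith)).const_mul _) ω
  have hrem : ω * I * (∫ x in Ioi 0, cexp ((ω * x : ℝ) * I) • stretchedExp a p x) + 1 =
      a * p * ∫ x in Ioi 0, cexp ((ω * x : ℝ) * I) • x ^ (p - 1) • stretchedExp a p x := by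
    simp only [← smul_eq_mul, smul_comm (cexp _) (-_ : ℂ), integral_smul] at hparts ⊢
    rw [hparts, stretchedExp_zero hp.ne']
    simp
  rw [hrem, norm_mul, mul_assoc]
  gcongr
  exact hC ω hω

end StretchedExponential

section Bilateral

variable {E : Type*} {f g : ℝ → E}

/-- The function on the line equal to `f` on the half-line `0 ≤ x` and to the reflection of `g` on
the half-line `x < 0`; its Fourier integrals split into two integrals over `Ioi 0`. -/
noncomputable def bilateral (f g : ℝ → E) (x : ℝ) : E := if 0 ≤ x then f x else g (-x)

theorem bilateral_of_nonneg (f g : ℝ → E) {x : ℝ} (hx : 0 ≤ x) : bilateral f g x = f x :=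
  if_pos hx

theorem bilateral_of_neg (f g : ℝ → E) {x : ℝ} (hx : x < 0) : bilateral f g x = g (-x) :=
  if_neg hx.not_ge

theorem continuous_bilateral [TopologicalSpace E] (hf : Continuous f) (hg : Continuous g)
    (h₀ : f 0 = g 0) : Continuous (bilateral f g) :=
  hf.if_le (hg.comp continuous_neg) continuous_const continuous_id fun x hx => by simp [← hx, h₀]

variable [NormedAddCommGroup E]

theorem integrable_bilateral (hf : IntegrableOn f (Ioi 0)) (hg : IntegrableOn g (Ioi 0)) :
    Integrable (bilateral f g) := by
  have hpos : IntegrableOn (bilateral f g) (Ioi 0) :=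
    hf.congr_fun (fun x hx => (bilateral_of_nonneg f g (le_of_lt hx)).symm) measurableSet_Ioi
  have hneg : IntegrableOn (bilateral f g) (Iio 0) :=
    IntegrableOn.congr_fun (IntegrableOn.comp_neg_Iio (c := 0) (by rwa [neg_zero]))
      (fun x hx => (bilateral_of_neg f g hx).symm) measurableSet_Iio
  rw [← integrableOn_univ, ← Iic_union_Ioi (a := (0 : ℝ))]
  exact ((integrableOn_Iic_iff_integrableOn_Iio (by simp)).2 hneg).union hpos

theorem integral_bilateral [NormedSpace ℝ E] (hf : IntegrableOn f (Ioi 0))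
    (hg : IntegrableOn g (Ioi 0)) :
    ∫ x, bilateral f g x = (∫ x in Ioi 0, f x) + ∫ x in Ioi 0, g x := by
  have hpos : ∫ x in Ioi 0, bilateral f g x = ∫ x in Ioi 0, f x :=
    setIntegral_congr_fun measurableSet_Ioi fun x hx => bilateral_of_nonneg f g (le_of_lt hx)
  have hneg : ∫ x in Iic 0, bilateral f g x = ∫ x in Ioi 0, g x := by
    rw [← neg_zero, ← integral_comp_neg_Ioi, neg_zero]
    exact setIntegral_congr_fun measurableSet_Ioi fun x hx => by
      simp only [bilateral_of_neg f g (neg_lt_zero.2 hx), neg_neg]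
  rw [← hpos, ← hneg, ← compl_Ioi, integral_add_compl measurableSet_Ioi
    (integrable_bilateral hf hg)]

end Bilateral

section Fourier

theorem integrable_of_isBigO_norm_rpow_neg {V F : Type*} [NormedAddCommGroup V] [NormedSpace ℝ V]
    [FiniteDimensional ℝ V] [MeasurableSpace V] [BorelSpace V] {μ : Measure V} [μ.IsAddHaarMeasure]
    [NormedAddCommGroup F] {h : V → F} {r : ℝ} (hr : Module.finrank ℝ V < r)
    (hloc : LocallyIntegrable h μ) (hO : h =O[cocompact V] fun x => ‖x‖ ^ (-r)) :
    Integrable h μ := by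
  have hr₀ : 0 ≤ r := (Nat.cast_nonneg _).trans hr.le
  refine hloc.integrable_of_isBigO_cocompact (hO.trans (IsBigO.of_bound (2 ^ r) ?_))
    ((integrable_one_add_norm hr).integrableAtFilter _)
  filter_upwards [tendsto_norm_cocompact_atTop.eventually_ge_atTop 1] with x hx
  have hx₀ : 0 < ‖x‖ := by linarith
  rw [Real.norm_of_nonneg (by positivity), Real.norm_of_nonneg (by positivity),
    Real.rpow_neg (by positivity), Real.rpow_neg (by positivity), ← div_eq_mul_inv,
    inv_le_comm₀ (by positivity) (by positivity), inv_div, div_le_iff₀ (by positivity), mul_comm,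
    ← Real.mul_rpow (by norm_num) hx₀.le]
  exact Real.rpow_le_rpow (by positivity) (by linarith) hr₀

variable {E : Type*} [NormedAddCommGroup E] [NormedSpace ℂ E]

theorem fourier_div_two_pi (f : ℝ → E) (x : ℝ) :
    𝓕 f (x / (2 * Real.pi)) = ∫ ξ, cexp ((-x * ξ : ℝ) * I) • f ξ := by
  rw [Real.fourier_real_eq_integral_exp_smul]
  congr! 5 with ξ
  field_simp

theorem fourier_bilateral_div_two_pi {f g : ℝ → E} (hf : IntegrableOn f (Ioi 0))
    (hg : IntegrableOn g (Ioi 0)) (x : ℝ) :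
    𝓕 (bilateral f g) (x / (2 * Real.pi)) =
      (∫ ξ in Ioi 0, cexp ((-x * ξ : ℝ) * I) • f ξ) +
        ∫ ξ in Ioi 0, cexp ((x * ξ : ℝ) * I) • g ξ := by
  rw [fourier_div_two_pi, ← integral_bilateral (integrableOn_exp_mul_I_smul hf (-x))
    (integrableOn_exp_mul_I_smul hg x)]
  congr 1 with ξ
  rcases le_or_gt 0 ξ with hξ | hξ
  · simp only [bilateral_of_nonneg _ _ hξ]
  · simp only [bilateral_of_neg _ _ hξ, neg_mul, mul_neg]

theorem integral_exp_smul_fourier_div_two_pi [CompleteSpace E] {f : ℝ → E} (hcont : Continuous f)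
    (hf : Integrable f) (hf' : Integrable (𝓕 f)) (ξ : ℝ) :
    ∫ x : ℝ, cexp ((ξ * x : ℝ) * I) • (2 * Real.pi)⁻¹ • 𝓕 f (x / (2 * Real.pi)) = f ξ := by
  have hrescale := Measure.integral_comp_div
    (fun w : ℝ => cexp ((2 * Real.pi * inner ℝ w ξ : ℝ) * I) • 𝓕 f w) (2 * Real.pi)
  rw [← Real.fourierInv_eq', hcont.fourierInv_fourier_eq hf hf', abs_of_pos Real.two_pi_pos,
    ← inv_smul_eq_iff₀ Real.two_pi_pos.ne', ← integral_smul] at hrescale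
  rw [← hrescale]
  congr 1 with x
  have hphase : 2 * Real.pi * inner ℝ (x / (2 * Real.pi)) ξ = ξ * x := by
    rw [Real.inner_apply]
    field_simp
  rw [smul_comm, hphase]

end Fourier

section BilateralStretchedExponential

variable {a b : ℂ} {p : ℝ}

theorem continuous_bilateral_stretchedExp (a b : ℂ) (hp : 0 < p) :
    Continuous (bilateral (stretchedExp a p) (stretchedExp b p)) :=
  continuous_bilateral (continuous_stretchedExp a hp.le) (continuous_stretchedExp b hp.le)
    (by simp only [stretchedExp_zero hp.ne'])

theorem integrable_bilateral_stretchedExp (ha : 0 < a.re) (hb : 0 < b.re) (hp : 0 < p) :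
    Integrable (bilateral (stretchedExp a p) (stretchedExp b p)) :=
  integrable_bilateral (integrableOn_stretchedExp ha hp) (integrableOn_stretchedExp hb hp)

-- The boundary terms of the two half-lines at the origin cancel because both branches equal `1`
-- there.
theorem exists_abs_mul_norm_fourier_bilateral_stretchedExp_le {β : ℝ} (ha : 0 < a.re)
    (hb : 0 < b.re) (hp : 0 < p) (hβ₀ : 0 < β) (hβ₁ : β < 1) (hβp : β ≤ p) :
    ∃ C, ∀ x : ℝ, x ≠ 0 →
      |x| * ‖𝓕 (bilateral (stretchedExp a p) (stretchedExp b p)) (x / (2 * Real.pi))‖ ≤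
        C * |x| ^ (-β) := by
  obtain ⟨A, hA⟩ :=
    exists_norm_mul_I_mul_integral_exp_smul_stretchedExp_add_one_le ha hp hβ₀ hβ₁ hβp
  obtain ⟨B, hB⟩ :=
    exists_norm_mul_I_mul_integral_exp_smul_stretchedExp_add_one_le hb hp hβ₀ hβ₁ hβp
  refine ⟨B + A, fun x hx => ?_⟩
  have hAx := hA (-x) (neg_ne_zero.2 hx)
  rw [abs_neg] at hAx
  rw [fourier_bilateral_div_two_pi (integrableOn_stretchedExp ha hp)
    (integrableOn_stretchedExp hb hp)]
  set P := ∫ ξ in Ioi 0, cexp ((-x * ξ : ℝ) * I) • stretchedExp a p ξ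
  set N := ∫ ξ in Ioi 0, cexp ((x * ξ : ℝ) * I) • stretchedExp b p ξ
  calc |x| * ‖P + N‖ = ‖x * I * (P + N)‖ := by
        rw [norm_mul, norm_mul, norm_I, mul_one, norm_real, Real.norm_eq_abs]
    _ = ‖(x * I * N + 1) - ((-x : ℝ) * I * P + 1)‖ := by push_cast; ring_nf
    _ ≤ B * |x| ^ (-β) + A * |x| ^ (-β) := norm_sub_le_of_le (hB x hx) hAx
    _ = (B + A) * |x| ^ (-β) := by ring

theorem integrable_fourier_bilateral_stretchedExp (ha : 0 < a.re) (hb : 0 < b.re) (hp : 0 < p) :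
    Integrable (𝓕 (bilateral (stretchedExp a p) (stretchedExp b p))) := by
  set β := min p (1 / 2)
  have hβ₀ : 0 < β := lt_min hp (by norm_num)
  have hβ₁ : β < 1 := (min_le_right _ _).trans_lt (by norm_num)
  obtain ⟨C, hC⟩ := exists_abs_mul_norm_fourier_bilateral_stretchedExp_le ha hb hp hβ₀ hβ₁
    (min_le_left _ _)
  have hcont : Continuous (𝓕 (bilateral (stretchedExp a p) (stretchedExp b p))) :=
    VectorFourier.fourierIntegral_continuous Real.continuous_fourierChar continuous_inner
      (integrable_bilateral_stretchedExp ha hb hp)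
  rw [← integrable_comp_div_iff _ Real.two_pi_pos.ne']
  refine integrable_of_isBigO_norm_rpow_neg (r := 1 + β) (by simpa)
    (hcont.comp (continuous_id.div_const _)).locallyIntegrable (IsBigO.of_bound C ?_)
  filter_upwards [tendsto_norm_cocompact_atTop.eventually_gt_atTop 0] with x hx
  rw [Real.norm_of_nonneg (by positivity), neg_add, Real.rpow_add hx, Real.rpow_neg_one,
    mul_left_comm, ← div_eq_inv_mul, le_div_iff₀' hx]
  exact hC x (norm_pos_iff.1 hx)

end BilateralStretchedExponential

section Product

theorem integral_exp_sum_mul_prod {ι : Type*} [Fintype ι] (f : ι → ℝ → ℂ) (ω : ι → ℝ) :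
    ∫ x : ι → ℝ, cexp ((∑ i, ω i * x i : ℝ) * I) * ∏ i, f i (x i) =
      ∏ i, ∫ x, cexp ((ω i * x : ℝ) * I) • f i x := by
  rw [← integral_fintype_prod_volume_eq_prod fun i x => cexp ((ω i * x : ℝ) * I) • f i x]
  simp only [smul_eq_mul, Finset.prod_mul_distrib, ← exp_sum, ofReal_sum, Finset.sum_mul]

end Product

section Green

/-- The coefficient `t exp (-i δ π / 2)` in front of `|ξ| ^ α` in the exponent of `ψ_{α,ξ}(t)` at
frequencies `ξ > 0`; at frequencies `ξ < 0` the sign of `δ` is reversed. -/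
noncomputable def skewCoeff (δ t : ℝ) : ℂ := t * cexp ((-(δ * (Real.pi / 2)) : ℝ) * I)

theorem skewCoeff_re_pos {δ t : ℝ} (hδ : |δ| < 1) (ht : 0 < t) : 0 < (skewCoeff δ t).re := by
  rw [skewCoeff, re_ofReal_mul, exp_ofReal_mul_I_re, Real.cos_neg]
  obtain ⟨hδl, hδu⟩ := abs_lt.1 hδ
  have := Real.pi_pos
  exact mul_pos ht (Real.cos_pos_of_mem_Ioo ⟨by nlinarith, by nlinarith⟩)

/-- The one-dimensional factor of `ψ_{α,ξ}(t)`, as a function of one coordinate of `ξ`. -/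
noncomputable def psiFactor (α δ t : ℝ) : ℝ → ℂ :=
  bilateral (stretchedExp (skewCoeff δ t) α) (stretchedExp (skewCoeff (-δ) t) α)

theorem psiFactor_eq_exp {α : ℝ} (hα : α ≠ 0) (δ t ξ : ℝ) :
    psiFactor α δ t ξ = cexp (-(t : ℂ) * ((|ξ| ^ α : ℝ) *
      cexp (-(I * δ * (Real.pi / 2 : ℝ) * (Real.sign ξ : ℝ))))) := by
  rcases lt_trichotomy ξ 0 with hξ | rfl | hξ
  · rw [psiFactor, bilateral_of_neg _ _ hξ, stretchedExp, skewCoeff, Real.sign_of_neg hξ,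
      abs_of_neg hξ]
    push_cast
    ring_nf
  · rw [psiFactor, bilateral_of_nonneg _ _ le_rfl, stretchedExp_zero hα]
    simp [Real.zero_rpow hα]
  · rw [psiFactor, bilateral_of_nonneg _ _ hξ.le, stretchedExp, skewCoeff, Real.sign_of_pos hξ,
      abs_of_pos hξ]
    push_cast
    ring_nf

theorem psi_eq_prod {d : ℕ} {α : Fin d → ℝ} (hα : ∀ i, α i ≠ 0) (δ ξ : Fin d → ℝ) (t : ℝ) :
    psi α δ ξ t = ∏ i, psiFactor (α i) (δ i) t (ξ i) := by
  simp only [psi, psiFactor_eq_exp (hα _), ← exp_sum, Finset.mul_sum]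

theorem Gd_eq_prod {d : ℕ} {α : Fin d → ℝ} (hα : ∀ i, α i ≠ 0) (δ : Fin d → ℝ) (t : ℝ)
    (x : Fin d → ℝ) :
    Gd α δ t x =
      ∏ i, (2 * Real.pi)⁻¹ • 𝓕 (psiFactor (α i) (δ i) t) (x i / (2 * Real.pi)) := by
  have hphase : ∀ ξ : Fin d → ℝ,
      -(I * (∑ i, ξ i * x i : ℝ)) = (∑ i, -x i * ξ i : ℝ) * I := fun ξ => by
    simp only [mul_comm I, mul_comm (-x _), mul_neg, Finset.sum_neg_distrib, ofReal_neg, neg_mul]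
  simp only [Gd, psi_eq_prod hα, hphase, integral_exp_sum_mul_prod, fourier_div_two_pi,
    Finset.prod_smul, Finset.prod_const, Finset.card_univ, Fintype.card_fin, inv_pow]

end Green

theorem stmt4_general {d : ℕ} (α δ : Fin d → ℝ) (hα : ∀ i, 0 < α i) (hδ : ∀ i, |δ i| < 1)
    (t : ℝ) (ht : 0 < t) :
    Integrable (fun ξ : Fin d → ℝ => psi α δ ξ t) ∧
    Integrable (fun x : Fin d → ℝ => Gd α δ t x) ∧
    ∀ ξ : Fin d → ℝ,
      (∫ x : Fin d → ℝ,
        Complex.exp (Complex.I * ((∑ i, ξ i * x i : ℝ) : ℂ)) * Gd α δ t x) =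
      psi α δ ξ t := by
  have hα₀ : ∀ i, α i ≠ 0 := fun i => (hα i).ne'
  have hre : ∀ i, 0 < (skewCoeff (δ i) t).re := fun i => skewCoeff_re_pos (hδ i) ht
  have hre' : ∀ i, 0 < (skewCoeff (-δ i) t).re := fun i =>
    skewCoeff_re_pos (by rw [abs_neg]; exact hδ i) ht
  have hψ : ∀ i, Integrable (psiFactor (α i) (δ i) t) := fun i =>
    integrable_bilateral_stretchedExp (hre i) (hre' i) (hα i)
  have hF : ∀ i, Integrable (𝓕 (psiFactor (α i) (δ i) t)) := fun i =>
    integrable_fourier_bilateral_stretchedExp (hre i) (hre' i) (hα i)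
  simp only [psi_eq_prod hα₀, Gd_eq_prod hα₀]
  refine ⟨.fintype_prod hψ,
    .fintype_prod fun i => ((hF i).comp_div Real.two_pi_pos.ne').smul (2 * Real.pi)⁻¹, fun ξ => ?_⟩
  simp only [mul_comm I]
  rw [integral_exp_sum_mul_prod fun i x =>
    (2 * Real.pi)⁻¹ • 𝓕 (psiFactor (α i) (δ i) t) (x / (2 * Real.pi))]
  exact Finset.prod_congr rfl fun i _ => integral_exp_smul_fourier_div_two_pi
    (continuous_bilateral_stretchedExp _ _ (hα i)) (hψ i) (hF i) (ξ i)

theorem abs_lt_one_of_le_min {α δ : ℝ} (hα : α ≠ 1) (hδ : |δ| ≤ min α (2 - α)) : |δ| < 1 := by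
  obtain ⟨h, h'⟩ := le_min_iff.1 hδ
  rcases hα.lt_or_gt with h₁ | h₁ <;> linarith

theorem stmt4 {d : ℕ} (hd : 0 < d) (α δ : Fin d → ℝ)
    (hα : ∀ i, 0 < α i ∧ α i ≤ 2 ∧ α i ≠ 1)
    (hδ : ∀ i, |δ i| ≤ min (α i) (2 - α i))
    (t : ℝ) (ht : 0 < t) :
    Integrable (fun ξ : Fin d → ℝ => psi α δ ξ t) ∧
    Integrable (fun x : Fin d → ℝ => Gd α δ t x) ∧
    ∀ ξ : Fin d → ℝ,
      (∫ x : Fin d → ℝ,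
        Complex.exp (Complex.I * ((∑ i, ξ i * x i : ℝ) : ℂ)) * Gd α δ t x) =
      psi α δ ξ t :=
  stmt4_general α δ (fun i => (hα i).1) (fun i => abs_lt_one_of_le_min (hα i).2.2 (hδ i)) t ht
end

section
/- Let α ∈ (0,2]∖{1} and δ ∈ ℝ with |δ| ≤ min(α, 2−α), and let t > 0. Then G_{α,δ}(t,x) is real and nonnegative for every x ∈ ℝ, and ∫_ℝ G_{α,δ}(t,x) dx = 1; that is, G_{α,δ}(t,·) is the probability density of a Lévy α-stable law. -/
open MeasureTheory
open scoped ComplexOrder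

/-- The one-dimensional Green function
`G_{α,δ}(t,x) = (1/2π) ∫ exp(−izx − t|z|^α exp(−iδ(π/2) sgn z)) dz`. -/
noncomputable def G1 (a δ : ℝ) (t x : ℝ) : ℂ :=
  ((1 / (2 * Real.pi) : ℝ)) • ∫ z : ℝ,
    Complex.exp (-(Complex.I * (z : ℂ) * (x : ℂ)) -
      ((t * |z| ^ a : ℝ) : ℂ) *
        Complex.exp (-(Complex.I * (δ : ℂ) * ((Real.pi / 2 : ℝ) : ℂ) *
          ((Real.sign z : ℝ) : ℂ))))

/-!
`G1 a δ t` is a rescaled Fourier transform of `exp (-t Ψ)`, `Ψ z = |z|^a exp (-iδ(π/2) sgn z)`, so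
it is enough, by Bochner's argument, that `exp (-t Ψ)` be positive definite.

For `0 < a ≤ 1` the binomial coefficients of `(1 - w)^a` beyond the constant term are nonpositive,
and for `1 ≤ a ≤ 2` those beyond the linear term are nonnegative. Hence, for `w` a damped character,
`-(1 - w)^a`, respectively `w⁻¹ (1 - w)^a`, is a positive definite function minus a constant: the
exponent of a compound Poisson law. Taking `w = exp (h (iz - h))`, scaling by `h^(-a)` and letting
`h → 0` yields the exponents `∓(-iz)^a` of the two totally skewed laws; after reflection these are
`-Ψ` for the extreme values `|δ| = min a (2 - a)`. For the other values of `δ`, the symbol `Ψ` lies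
in the convex cone spanned by the two extreme ones, except at `a = 1`, which is reached by a limit.

Averaging the quadratic form of a positive definite `φ` over independent Gaussian samples gives
`0 ≤ ∫ φ dγ` for every centred Gaussian `γ`, hence nonnegativity of its Fourier transform when `φ`
is integrable. A nonnegative Fourier transform of an integrable function continuous at `0` is
integrable by Fatou's lemma, so Fourier inversion at `0` gives its total mass `φ 0 = 1`.
-/

open Filter Topology FourierTransform ProbabilityTheory

/-! ### Positive definite functions -/

/-- Positive definite functions on an additive group: every matrix `φ (xᵢ - xⱼ)` is positive
semidefinite. Mathlib's `Matrix.PosSemidef` allows infinite index types (it tests finitely supported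
vectors), so all finite families of points are covered at once. -/
def IsPositiveDefinite {G : Type*} [AddGroup G] (φ : G → ℂ) : Prop :=
  (Matrix.of fun x y : G => φ (x - y)).PosSemidef

namespace IsPositiveDefinite

variable {G : Type*} [AddGroup G] {φ ψ : G → ℂ}

theorem posSemidef {ι : Type*} (hφ : IsPositiveDefinite φ) (x : ι → G) :
    (Matrix.of fun i j => φ (x i - x j)).PosSemidef :=
  hφ.submatrix x

theorem map_zero_nonneg (hφ : IsPositiveDefinite φ) : 0 ≤ φ 0 := by
  simpa using hφ.diag_nonneg (i := 0)

protected theorem map_neg (hφ : IsPositiveDefinite φ) (x : G) : φ (-x) = star (φ x) := by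
  simpa using (hφ.isHermitian.apply 0 x).symm

theorem norm_le_map_zero (hφ : IsPositiveDefinite φ) (x : G) : ‖φ x‖ ≤ (φ 0).re := by
  have h0 := hφ.map_zero_nonneg
  have hdet : 0 ≤ φ 0 * φ 0 - φ x * star (φ x) := by
    simpa [Matrix.det_fin_two, hφ.map_neg] using (hφ.posSemidef ![x, 0]).det_nonneg
  rw [Complex.star_def, Complex.mul_conj', Complex.eq_re_of_ofReal_le h0, ← pow_two, sub_nonneg]
    at hdet
  exact (sq_le_sq₀ (norm_nonneg _) (Complex.nonneg_iff.1 h0).1).1 (by exact_mod_cast hdet)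

theorem comp {H : Type*} [AddGroup H] (hφ : IsPositiveDefinite φ) (f : H →+ G) :
    IsPositiveDefinite fun x => φ (f x) := by
  simpa [IsPositiveDefinite, Matrix.submatrix] using hφ.submatrix f

theorem add (hφ : IsPositiveDefinite φ) (hψ : IsPositiveDefinite ψ) :
    IsPositiveDefinite fun x => φ x + ψ x :=
  Matrix.PosSemidef.add hφ hψ

theorem mul (hφ : IsPositiveDefinite φ) (hψ : IsPositiveDefinite ψ) :
    IsPositiveDefinite fun x => φ x * ψ x :=
  Matrix.PosSemidef.hadamard hφ hψ

theorem exp_mul_I (f : G →+ ℝ) : IsPositiveDefinite fun x => Complex.exp (f x * Complex.I) := by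
  let e : G → ℂ := fun x => Complex.exp (f x * Complex.I)
  have he (x y : G) : e (x - y) = e x * star (e y) := by
    simp [e, ← Complex.exp_conj, ← Complex.exp_add, sub_mul, ← sub_eq_add_neg]
  refine ⟨Matrix.IsHermitian.ext fun x y => ?_, fun v => ?_⟩
  · change star (e (y - x)) = e (x - y)
    rw [he, he, star_mul', star_star, mul_comm]
  · have hv : (v.sum fun x vx => v.sum fun y vy => star vx * (e x * star (e y)) * vy) =
        star (v.sum fun x vx => star (e x) * vx) * v.sum fun y vy => star (e y) * vy := by
      simp only [Finsupp.sum, star_sum, Finset.sum_mul_sum, star_mul', star_star]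
      exact Finset.sum_congr rfl fun x _ => Finset.sum_congr rfl fun y _ => by ring
    change 0 ≤ v.sum fun x vx => v.sum fun y vy => star vx * e (x - y) * vy
    simpa only [he, hv] using star_mul_self_nonneg _

theorem const {c : ℂ} (hc : 0 ≤ c) : IsPositiveDefinite fun _ : G => c := by
  simpa [IsPositiveDefinite, Matrix.smul_of, Pi.smul_def]
    using Matrix.PosSemidef.smul (exp_mul_I (0 : G →+ ℝ)) hc

theorem pow (hφ : IsPositiveDefinite φ) (n : ℕ) : IsPositiveDefinite fun x => φ x ^ n := by
  induction n with
  | zero => simpa only [pow_zero] using const zero_le_one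
  | succ n ih => simpa only [pow_succ] using ih.mul hφ

theorem sum {ι : Type*} {φ : ι → G → ℂ} (s : Finset ι) (h : ∀ i ∈ s, IsPositiveDefinite (φ i)) :
    IsPositiveDefinite fun x => ∑ i ∈ s, φ i x := by
  unfold IsPositiveDefinite
  convert Matrix.posSemidef_sum s h
  ext x y
  simp [Matrix.sum_apply]

theorem of_tendsto {ι : Type*} {l : Filter ι} [l.NeBot] {φ : ι → G → ℂ}
    (h : ∀ᶠ i in l, IsPositiveDefinite (φ i)) (hψ : ∀ x, Tendsto (fun i => φ i x) l (𝓝 (ψ x))) :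
    IsPositiveDefinite ψ := by
  refine ⟨Matrix.IsHermitian.ext fun x y => ?_, fun v => ?_⟩
  · exact tendsto_nhds_unique_of_eventuallyEq (hψ _).star (hψ _)
      (h.mono fun i hi => hi.isHermitian.apply x y)
  · exact ge_of_tendsto (tendsto_finsetSum _ fun x _ => tendsto_finsetSum _ fun y _ =>
      ((hψ (x - y)).const_mul _).mul_const _) (h.mono fun i hi => hi.2 v)

theorem of_hasSum {ι : Type*} {φ : ι → G → ℂ} (h : ∀ i, IsPositiveDefinite (φ i))
    (hψ : ∀ x, HasSum (fun i => φ i x) (ψ x)) : IsPositiveDefinite ψ :=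
  of_tendsto (Eventually.of_forall fun s => sum s fun i _ => h i) hψ

theorem exp (hφ : IsPositiveDefinite φ) : IsPositiveDefinite fun x => Complex.exp (φ x) := by
  refine of_hasSum (φ := fun (n : ℕ) x => (1 / n.factorial : ℂ) * φ x ^ n)
    (fun n => (const ?_).mul (hφ.pow n)) fun x => ?_
  · positivity
  · simpa [Complex.exp_eq_exp_ℂ, div_eq_inv_mul] using
      NormedSpace.expSeries_div_hasSum_exp (𝔸 := ℂ) (φ x)

end IsPositiveDefinite

/-! ### Fourier transforms of positive definite functions -/

namespace IsPositiveDefinite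

variable {G : Type*} [AddGroup G] [MeasurableSpace G] {φ : G → ℂ}

theorem integrable_of_isFiniteMeasure {Ω : Type*} [MeasurableSpace Ω] {μ : Measure Ω}
    [IsFiniteMeasure μ] (hφ : IsPositiveDefinite φ) (hm : Measurable φ) {f : Ω → G}
    (hf : Measurable f) : Integrable (fun ω => φ (f ω)) μ :=
  .of_bound (hm.comp hf).aestronglyMeasurable _ (ae_of_all _ fun ω => hφ.norm_le_map_zero (f ω))

/-- Average the quadratic form of `φ` over an independent sample of size `n + 1`: each of the
`n + 1` diagonal entries is `φ 0` and each of the other entries has the required mean. -/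
theorem map_zero_add_integral_prod_sub_nonneg [MeasurableSub₂ G] (hφ : IsPositiveDefinite φ)
    (hm : Measurable φ) (ν : Measure G) [IsProbabilityMeasure ν] (n : ℕ) :
    0 ≤ φ 0 + n * ∫ p : G × G, φ (p.1 - p.2) ∂ν.prod ν := by
  have hsub : Measurable fun p : G × G => φ (p.1 - p.2) := hm.comp measurable_sub
  have hentry (i j : Fin (n + 1)) : ∫ x, φ (x i - x j) ∂Measure.infinitePi (fun _ => ν) =
      (∫ p : G × G, φ (p.1 - p.2) ∂ν.prod ν) +
        if i = j then φ 0 - ∫ p : G × G, φ (p.1 - p.2) ∂ν.prod ν else 0 := by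
    split_ifs with hij
    · simp [hij]
    · rw [add_zero, ← Measure.infinitePi_map_eval_prod (P := fun _ : Fin (n + 1) => ν) hij,
        integral_map (by fun_prop) hsub.aestronglyMeasurable]
  have hint (i j : Fin (n + 1)) :
      Integrable (fun x => φ (x i - x j)) (Measure.infinitePi fun _ => ν) :=
    hφ.integrable_of_isFiniteMeasure hm (by fun_prop)
  have hsum : ∫ x, ∑ i, ∑ j, φ (x i - x j) ∂Measure.infinitePi (fun _ : Fin (n + 1) => ν) =
      (n + 1) * (φ 0 + n * ∫ p : G × G, φ (p.1 - p.2) ∂ν.prod ν) := by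
    rw [integral_finsetSum _ fun i _ => integrable_finsetSum _ fun j _ => hint i j]
    simp only [integral_finsetSum _ fun j _ => hint _ j, hentry, Finset.sum_add_distrib,
      Finset.sum_ite_eq, Finset.mem_univ, if_true, Finset.sum_const, Finset.card_univ,
      Fintype.card_fin, nsmul_eq_mul, Nat.cast_add_one]
    ring
  have hnonneg : 0 ≤ ∫ x, ∑ i, ∑ j, φ (x i - x j) ∂Measure.infinitePi (fun _ : Fin (n + 1) => ν) :=
    integral_nonneg fun x => by
      simpa [dotProduct, Matrix.mulVec] using (hφ.posSemidef x).dotProduct_mulVec_nonneg 1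
  rw [hsum] at hnonneg
  exact le_of_mul_le_mul_left (by simpa using hnonneg) (by positivity : (0 : ℂ) < n + 1)

theorem integral_prod_sub_nonneg [MeasurableSub₂ G] (hφ : IsPositiveDefinite φ)
    (hm : Measurable φ) (ν : Measure G) [IsProbabilityMeasure ν] :
    0 ≤ ∫ p : G × G, φ (p.1 - p.2) ∂ν.prod ν := by
  set A := ∫ p : G × G, φ (p.1 - p.2) ∂ν.prod ν
  have hlim : Tendsto (fun n : ℕ => φ 0 / n + A) atTop (𝓝 A) := by
    simpa using (tendsto_const_div_atTop_nhds_zero_nat (φ 0)).add_const A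
  refine ge_of_tendsto hlim ((eventually_ne_atTop 0).mono fun n hn => ?_)
  have hn0 : (n : ℂ) ≠ 0 := by exact_mod_cast hn
  have := mul_nonneg (by positivity : 0 ≤ (n : ℂ)⁻¹)
    (hφ.map_zero_add_integral_prod_sub_nonneg hm ν n)
  rwa [mul_add, inv_mul_cancel_left₀ hn0, inv_mul_eq_div] at this

theorem integral_gaussianReal_nonneg {φ : ℝ → ℂ} (hφ : IsPositiveDefinite φ) (hm : Measurable φ)
    (v : NNReal) : 0 ≤ ∫ x, φ x ∂gaussianReal 0 v := by
  set ν := gaussianReal 0 (v / 2) with hν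
  have hlaw : (ν.prod ν).map (fun p => p.1 - p.2) = gaussianReal 0 v :=
    calc (ν.prod ν).map (fun p => p.1 - p.2)
        = (ν.prod (ν.map fun x => -x)).map (fun p => p.1 + p.2) := by
          nth_rw 3 [← Measure.map_id (μ := ν)]
          rw [Measure.map_prod_map _ _ measurable_id measurable_neg,
            Measure.map_map (by fun_prop) (by fun_prop)]
          simp only [Function.comp_def, Prod.map, id, sub_eq_add_neg]
      _ = ν ∗ ν := by rw [hν, gaussianReal_map_neg, neg_zero, Measure.conv]
      _ = gaussianReal 0 v := by rw [hν, gaussianReal_conv_gaussianReal, add_halves, zero_add]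
  rw [← hlaw, integral_map (by fun_prop) hm.aestronglyMeasurable]
  exact hφ.integral_prod_sub_nonneg hm _

theorem integral_nonneg {φ : ℝ → ℂ} (hφ : IsPositiveDefinite φ) (hm : Measurable φ)
    (hint : Integrable φ) : 0 ≤ ∫ x, φ x := by
  refine ge_of_tendsto (Real.tendsto_integral_cexp_sq_smul hint)
    ((eventually_gt_atTop 0).mono fun c hc => ?_)
  lift c to NNReal using hc.le
  have hvar : c / 2 ≠ 0 := (half_pos (by exact_mod_cast hc)).ne'
  have hnorm : 0 < √(2 * Real.pi * ↑(c / 2)) := by positivity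
  have hgauss : 0 ≤ √(2 * Real.pi * ↑(c / 2)) * ∫ x, φ x ∂gaussianReal 0 (c / 2) :=
    mul_nonneg (by positivity) (hφ.integral_gaussianReal_nonneg hm _)
  rw [integral_gaussianReal_eq_integral_smul hvar, ← integral_const_mul] at hgauss
  refine hgauss.trans_eq (integral_congr_ae (ae_of_all _ fun x => ?_))
  have hpdf : √(2 * Real.pi * ↑(c / 2)) * gaussianPDFReal 0 (c / 2) x =
      Real.exp (-(c : ℝ)⁻¹ * ‖x‖ ^ 2) := by
    rw [gaussianPDFReal, mul_inv_cancel_left₀ hnorm.ne', sub_zero, Real.norm_eq_abs, sq_abs,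
      NNReal.coe_div, NNReal.coe_ofNat, mul_div_cancel₀ _ two_ne_zero, neg_div, div_eq_inv_mul,
      neg_mul]
  simp only [Complex.real_smul, smul_eq_mul, ← mul_assoc, ← Complex.ofReal_mul, hpdf]
  push_cast
  rfl

theorem fourier_nonneg {φ : ℝ → ℂ} (hφ : IsPositiveDefinite φ) (hm : Measurable φ)
    (hint : Integrable φ) (w : ℝ) : 0 ≤ 𝓕 φ w := by
  have hchar : IsPositiveDefinite fun x : ℝ =>
      Complex.exp (↑(-2 * Real.pi * w * x) * Complex.I) :=
    exp_mul_I (AddMonoidHom.mulLeft (-2 * Real.pi * w))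
  have hcint : Integrable fun x : ℝ =>
      Complex.exp (↑(-2 * Real.pi * w * x) * Complex.I) * φ x :=
    hint.bdd_mul (c := 1) (by fun_prop) (ae_of_all _ fun x => (Complex.norm_exp_ofReal_mul_I _).le)
  refine ((hchar.mul hφ).integral_nonneg (by fun_prop) hcint).trans_eq ?_
  simp only [Real.fourier_eq', smul_eq_mul, RCLike.inner_apply, conj_trivial, mul_assoc]

end IsPositiveDefinite

section FourierIntegrable

variable {V : Type*} [NormedAddCommGroup V] [InnerProductSpace ℝ V] [FiniteDimensional ℝ V]
  [MeasurableSpace V] [BorelSpace V]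

theorem continuous_fourier {E : Type*} [NormedAddCommGroup E] [NormedSpace ℂ E] {f : V → E}
    (hf : Integrable f) : Continuous (𝓕 f) :=
  VectorFourier.fourierIntegral_continuous Real.continuous_fourierChar (by exact continuous_inner)
    hf

theorem integrable_cexp_neg_inv_mul_sq_norm {c : ℝ} (hc : 0 < c) :
    Integrable fun w : V => Complex.exp (-(c : ℂ)⁻¹ * ‖w‖ ^ 2) := by
  simpa using GaussianFourier.integrable_cexp_neg_mul_sq_norm_add
    (b := (c : ℂ)⁻¹) (by simpa) 0 (0 : V)

theorem tendsto_integral_cexp_sq_smul_fourier {E : Type*} [NormedAddCommGroup E] [NormedSpace ℂ E]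
    [CompleteSpace E] {f : V → E} (hf : Integrable f) (hc : ContinuousAt f 0) :
    Tendsto (fun c : ℝ => ∫ w, Complex.exp (-c⁻¹ * ‖w‖ ^ 2) • 𝓕 f w) atTop (𝓝 (f 0)) := by
  refine (Real.tendsto_integral_gaussian_smul' hf hc).congr' ?_
  filter_upwards [Ioi_mem_atTop 0] with c (hc : 0 < c)
  have hswap := VectorFourier.integral_fourierIntegral_smul_eq_flip (L := innerₗ V)
    Real.continuous_fourierChar continuous_inner
    (integrable_cexp_neg_inv_mul_sq_norm hc) hf
  have hself : ∫ w, 𝓕 (fun w : V => Complex.exp (-(c : ℂ)⁻¹ * ‖w‖ ^ 2)) w • f w =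
      ∫ w, Complex.exp (-c⁻¹ * ‖w‖ ^ 2) • 𝓕 f w := by
    simpa using! hswap
  rw [← hself]
  congr with w
  rw [fourier_gaussian_innerProductSpace (by simpa), zero_sub, norm_neg, div_inv_eq_mul,
    div_inv_eq_mul]
  ring_nf

theorem lintegral_enorm_eq_enorm_integral_of_nonneg {α : Type*} [MeasurableSpace α] {μ : Measure α}
    {f : α → ℂ} (hf : Integrable f μ) (h0 : 0 ≤ f) : ∫⁻ x, ‖f x‖ₑ ∂μ = ‖∫ x, f x ∂μ‖ₑ := by
  have h : ∫ x, f x ∂μ = ((∫ x, ‖f x‖ ∂μ : ℝ) : ℂ) := by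
    rw [← integral_complex_ofReal]
    exact integral_congr_ae (ae_of_all _ fun x => Complex.eq_coe_norm_of_nonneg (h0 x))
  rw [h, ← ofReal_integral_norm_eq_lintegral_enorm hf, ← ofReal_norm, Complex.norm_real,
    Real.norm_of_nonneg (by positivity)]

theorem lintegral_enorm_fourier_le_of_nonneg {f : V → ℂ} (hf : Integrable f)
    (hc : ContinuousAt f 0) (h0 : ∀ w, 0 ≤ 𝓕 f w) : ∫⁻ w, ‖𝓕 f w‖ₑ ≤ ‖f 0‖ₑ := by
  let g : ℝ → V → ℂ := fun c w => Complex.exp (-c⁻¹ * ‖w‖ ^ 2) • 𝓕 f w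
  have hg0 (c : ℝ) : 0 ≤ g c := fun w => smul_nonneg (by norm_cast; positivity) (h0 w)
  have hgint (c : ℝ) (hc : 0 < c) : Integrable (g c) := by
    simpa [g, Pi.mul_def] using (integrable_cexp_neg_inv_mul_sq_norm hc).mul_bdd
      (continuous_fourier hf).aestronglyMeasurable
      (ae_of_all _ fun w => VectorFourier.norm_fourierIntegral_le_integral_norm _ _ _ _ w)
  have hglim (w : V) : Tendsto (fun c => g c w) atTop (𝓝 (𝓕 f w)) := by
    have := ((tendsto_inv_atTop_zero (𝕜 := ℝ)).ofReal.neg.mul_const ((‖w‖ : ℂ) ^ 2)).cexp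
    simpa [g] using this.smul_const (𝓕 f w)
  calc ∫⁻ w, ‖𝓕 f w‖ₑ
      = ∫⁻ w, liminf (fun c => ‖g c w‖ₑ) atTop :=
        lintegral_congr fun w => (hglim w).enorm.liminf_eq.symm
    _ ≤ liminf (fun c => ∫⁻ w, ‖g c w‖ₑ) atTop :=
        lintegral_liminf_le' fun c => Continuous.aemeasurable (by
          have := continuous_fourier hf
          fun_prop)
    _ = liminf (fun c => ‖∫ w, g c w‖ₑ) atTop := by
        refine liminf_congr ((eventually_gt_atTop 0).mono fun c hc => ?_)
        exact lintegral_enorm_eq_enorm_integral_of_nonneg (hgint c hc) (hg0 c)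
    _ = ‖f 0‖ₑ := (tendsto_integral_cexp_sq_smul_fourier hf hc).enorm.liminf_eq

theorem integrable_fourier_of_nonneg {f : V → ℂ} (hf : Integrable f) (hc : ContinuousAt f 0)
    (h0 : ∀ w, 0 ≤ 𝓕 f w) : Integrable (𝓕 f) :=
  ⟨(continuous_fourier hf).aestronglyMeasurable,
    (lintegral_enorm_fourier_le_of_nonneg hf hc h0).trans_lt enorm_lt_top⟩

theorem integral_fourier_eq_of_nonneg {f : V → ℂ} (hf : Integrable f) (hc : ContinuousAt f 0)
    (h0 : ∀ w, 0 ≤ 𝓕 f w) : ∫ w, 𝓕 f w = f 0 := by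
  rw [← hf.fourierInv_fourier_eq (integrable_fourier_of_nonneg hf hc h0) hc]
  simp [Real.fourierInv_eq]

end FourierIntegrable

/-! ### Binomial series and Lévy exponents -/

section BinomialSeries

theorem hasSum_multichoose_neg_mul_pow (a : ℝ) {w : ℂ} (hw : ‖w‖ < 1) :
    HasSum (fun k => ((Ring.multichoose (-a) k : ℝ) : ℂ) * w ^ k) ((1 - w) ^ (a : ℂ)) := by
  have h := (Complex.one_div_one_sub_cpow_hasFPowerSeriesOnBall_zero (-a : ℂ)).hasSum (y := w)
    (by simpa [Metric.mem_eball, edist_zero_right, ← ofReal_norm] using hw)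
  have hcoeff (k : ℕ) :
      Ring.choose (-(a : ℂ) + k - 1) k = ((Ring.multichoose (-a) k : ℝ) : ℂ) := by
    rw [Ring.choose, ← Complex.coe_algebraMap, Ring.map_multichoose]
    congr 1
    push_cast [Complex.coe_algebraMap]
    ring
  simpa [hcoeff, Complex.cpow_neg, mul_comm] using h

theorem multichoose_succ_eq_mul_div (r : ℝ) (k : ℕ) :
    Ring.multichoose r (k + 1) = Ring.multichoose r k * ((r + k) / (k + 1)) := by
  have hfact (n : ℕ) : (n.factorial : ℝ) * Ring.multichoose r n = (ascPochhammer ℝ n).eval r := by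
    rw [← nsmul_eq_mul, Ring.factorial_nsmul_multichoose_eq_ascPochhammer,
      Polynomial.ascPochhammer_smeval_eq_eval]
  have hk := hfact (k + 1)
  rw [ascPochhammer_succ_eval, ← hfact, Nat.factorial_succ, Nat.cast_mul, Nat.cast_add_one] at hk
  have hk0 : (k.factorial : ℝ) ≠ 0 := by positivity
  field_simp
  exact mul_left_cancel₀ hk0 (by linear_combination hk)

theorem multichoose_neg_add_one_nonpos {a : ℝ} (h0 : 0 ≤ a) (h1 : a ≤ 1) (k : ℕ) :
    Ring.multichoose (-a) (k + 1) ≤ 0 := by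
  induction k with
  | zero => simpa
  | succ k ih =>
    rw [multichoose_succ_eq_mul_div]
    refine mul_nonpos_of_nonpos_of_nonneg ih (div_nonneg ?_ (by positivity))
    push_cast
    linarith [(k.cast_nonneg : (0 : ℝ) ≤ k)]

theorem multichoose_neg_add_two_nonneg {a : ℝ} (h1 : 1 ≤ a) (h2 : a ≤ 2) (k : ℕ) :
    0 ≤ Ring.multichoose (-a) (k + 2) := by
  induction k with
  | zero =>
    rw [multichoose_succ_eq_mul_div, Ring.multichoose_one_right, Nat.cast_one]
    exact mul_nonneg_of_nonpos_of_nonpos (by linarith)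
      (div_nonpos_of_nonpos_of_nonneg (by linarith) (by norm_num))
  | succ k ih =>
    rw [multichoose_succ_eq_mul_div]
    refine mul_nonneg ih (div_nonneg ?_ (by positivity))
    push_cast
    linarith [(k.cast_nonneg : (0 : ℝ) ≤ k)]

end BinomialSeries

namespace IsPositiveDefinite

variable {G : Type*} [AddGroup G] {φ ψ : G → ℂ} {a : ℝ}

theorem one_sub_one_sub_cpow (hφ : IsPositiveDefinite φ) (hlt : ∀ x, ‖φ x‖ < 1) (h0 : 0 ≤ a)
    (h1 : a ≤ 1) : IsPositiveDefinite fun x => 1 - (1 - φ x) ^ (a : ℂ) := by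
  refine of_hasSum
    (φ := fun (k : ℕ) x => ((-Ring.multichoose (-a) (k + 1) : ℝ) : ℂ) * φ x ^ (k + 1))
    (fun k => (const ?_).mul (hφ.pow _)) fun x => ?_
  · exact_mod_cast neg_nonneg.2 (multichoose_neg_add_one_nonpos h0 h1 k)
  · have h := (hasSum_nat_add_iff' 1).2 (hasSum_multichoose_neg_mul_pow a (hlt x))
    simpa using h.neg

theorem add_mul_one_sub_cpow (hφ : IsPositiveDefinite φ) (hψ : IsPositiveDefinite ψ)
    (hψφ : ∀ x, ψ x * φ x = 1) (hlt : ∀ x, ‖φ x‖ < 1) (h1 : 1 ≤ a) (h2 : a ≤ 2) :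
    IsPositiveDefinite fun x => a + ψ x * (1 - φ x) ^ (a : ℂ) := by
  have htail : IsPositiveDefinite fun x => ψ x * ((1 - φ x) ^ (a : ℂ) - (1 - a * φ x)) := by
    refine hψ.mul (of_hasSum
      (φ := fun (k : ℕ) x => ((Ring.multichoose (-a) (k + 2) : ℝ) : ℂ) * φ x ^ (k + 2))
      (fun k => (const ?_).mul (hφ.pow _)) fun x => ?_)
    · exact_mod_cast multichoose_neg_add_two_nonneg h1 h2 k
    · have h := (hasSum_nat_add_iff' 2).2 (hasSum_multichoose_neg_mul_pow a (hlt x))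
      simpa [Finset.sum_range_succ, sub_eq_add_neg] using h
  convert htail.add hψ using 2 with x
  linear_combination -(a : ℂ) * hψφ x

end IsPositiveDefinite

/-- Lévy exponents: functions `ψ` all of whose semigroup `exp (c ψ)`, `0 ≤ c`, consists of
positive definite functions. By Schoenberg's theorem these are the `ψ` for which `-ψ` is
negative definite. -/
def IsLevyExponent {G : Type*} [AddGroup G] (ψ : G → ℂ) : Prop :=
  ∀ c : ℝ, 0 ≤ c → IsPositiveDefinite fun x => Complex.exp (c * ψ x)

theorem IsPositiveDefinite.isLevyExponent_sub {G : Type*} [AddGroup G] {φ : G → ℂ}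
    (hφ : IsPositiveDefinite φ) (r : ℝ) : IsLevyExponent fun x => φ x - r := by
  intro c hc
  have hcφ : IsPositiveDefinite fun x => (c : ℂ) * φ x := (const (by exact_mod_cast hc)).mul hφ
  have hexp : (0 : ℂ) ≤ Real.exp (-(c * r)) := by exact_mod_cast (Real.exp_pos _).le
  convert (const hexp).mul hcφ.exp using 2 with x
  rw [Complex.ofReal_exp, ← Complex.exp_add]
  push_cast
  ring_nf

namespace IsLevyExponent

variable {G : Type*} [AddGroup G] {φ ψ : G → ℂ}

theorem add (hφ : IsLevyExponent φ) (hψ : IsLevyExponent ψ) :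
    IsLevyExponent fun x => φ x + ψ x := fun c hc => by
  simpa only [mul_add, Complex.exp_add] using (hφ c hc).mul (hψ c hc)

theorem const_mul {r : ℝ} (hr : 0 ≤ r) (hφ : IsLevyExponent φ) :
    IsLevyExponent fun x => r * φ x := fun c hc => by
  simpa only [Complex.ofReal_mul, mul_assoc] using hφ (c * r) (mul_nonneg hc hr)

theorem comp {H : Type*} [AddGroup H] (hφ : IsLevyExponent φ) (f : H →+ G) :
    IsLevyExponent fun x => φ (f x) := fun c hc => (hφ c hc).comp f

theorem of_tendsto {ι : Type*} {l : Filter ι} [l.NeBot] {φ : ι → G → ℂ}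
    (h : ∀ᶠ i in l, IsLevyExponent (φ i)) (hψ : ∀ x, Tendsto (fun i => φ i x) l (𝓝 (ψ x))) :
    IsLevyExponent ψ := fun c hc =>
  .of_tendsto (h.mono fun _ hi => hi c hc) fun x => ((hψ x).const_mul _).cexp

end IsLevyExponent

theorem ofReal_mul_cpow_ofReal {r : ℝ} (hr : 0 < r) (x : ℂ) (a : ℝ) :
    ((r : ℂ) * x) ^ (a : ℂ) = ((r ^ a : ℝ) : ℂ) * x ^ (a : ℂ) := by
  rw [Complex.cpow_ofReal, Complex.cpow_ofReal, Complex.arg_real_mul _ hr, norm_mul,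
    Complex.norm_of_nonneg hr.le, Real.mul_rpow hr.le (norm_nonneg x), Complex.ofReal_mul,
    mul_assoc]

theorem tendsto_inv_rpow_mul_one_sub_cpow {f : ℝ → ℂ} {f' : ℂ} {a : ℝ} (hf : HasDerivAt f f' 0)
    (hf0 : f 0 = 1) (hre : f'.re ≤ 0) (ha : 0 < a) :
    Tendsto (fun h : ℝ => ((h⁻¹ ^ a : ℝ) : ℂ) * (1 - f h) ^ (a : ℂ)) (𝓝[>] 0)
      (𝓝 ((-f') ^ (a : ℂ))) := by
  have hslope : Tendsto (fun h : ℝ => ((h⁻¹ : ℝ) : ℂ) * (1 - f h)) (𝓝[>] 0) (𝓝 (-f')) := by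
    simpa [hf0, neg_mul_eq_mul_neg] using hf.tendsto_slope_zero_right.neg
  have hcpow : ContinuousAt (fun w : ℂ => w ^ (a : ℂ)) (-f') :=
    Complex.continuousAt_cpow_const_of_re_pos (Or.inl (by simpa)) (by simpa)
  refine (hcpow.tendsto.comp hslope).congr' (eventually_mem_nhdsWithin.mono fun h hh => ?_)
  exact ofReal_mul_cpow_ofReal (inv_pos.2 hh) _ _

section Stable

theorem isPositiveDefinite_cexp_mul_I_add (b c : ℝ) :
    IsPositiveDefinite fun z : ℝ => Complex.exp (b * z * Complex.I + c) := by
  have hexp : (0 : ℂ) ≤ Real.exp c := by exact_mod_cast (Real.exp_pos _).le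
  simpa [Complex.exp_add] using
    (IsPositiveDefinite.exp_mul_I (AddMonoidHom.mulLeft b)).mul (.const hexp)

theorem norm_cexp_mul_I_sub_sq_lt_one {h : ℝ} (hh : h ≠ 0) (z : ℝ) :
    ‖Complex.exp (h * z * Complex.I + (-h ^ 2 : ℝ))‖ < 1 := by
  simpa [Complex.norm_exp, ← Complex.ofReal_pow] using sq_pos_of_ne_zero hh

theorem hasDerivAt_cexp_mul_I_sub_sq (z : ℝ) :
    HasDerivAt (fun h : ℝ => Complex.exp (h * z * Complex.I + (-h ^ 2 : ℝ))) (Complex.I * z) 0 := by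
  have hid : HasDerivAt (fun h : ℝ => (h : ℂ)) 1 0 := Complex.ofRealCLM.hasDerivAt
  simpa [mul_comm] using!
    (((hid.mul_const (z : ℂ)).mul_const Complex.I).add (hid.pow 2).neg).cexp

variable {a : ℝ}

theorem tendsto_inv_rpow_mul_one_sub_cexp_cpow (ha : 0 < a) (z : ℝ) :
    Tendsto (fun h : ℝ => ((h⁻¹ ^ a : ℝ) : ℂ) *
        (1 - Complex.exp (h * z * Complex.I + (-h ^ 2 : ℝ))) ^ (a : ℂ)) (𝓝[>] 0)
      (𝓝 ((-(Complex.I * z)) ^ (a : ℂ))) :=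
  tendsto_inv_rpow_mul_one_sub_cpow (hasDerivAt_cexp_mul_I_sub_sq z) (by simp) (by simp) ha

theorem isLevyExponent_neg_cpow (h0 : 0 < a) (h1 : a ≤ 1) :
    IsLevyExponent fun z : ℝ => -(-(Complex.I * z)) ^ (a : ℂ) := by
  refine .of_tendsto (l := 𝓝[>] (0 : ℝ)) (eventually_mem_nhdsWithin.mono fun h hh => ?_)
    fun z => (tendsto_inv_rpow_mul_one_sub_cexp_cpow h0 z).neg
  have hpd := (isPositiveDefinite_cexp_mul_I_add h (-h ^ 2)).one_sub_one_sub_cpow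
    (norm_cexp_mul_I_sub_sq_lt_one (Set.mem_Ioi.1 hh).ne') h0.le h1
  have hscale : 0 ≤ h⁻¹ ^ a := Real.rpow_nonneg (inv_nonneg.2 (Set.mem_Ioi.1 hh).le) a
  simpa using (hpd.isLevyExponent_sub 1).const_mul hscale

theorem isLevyExponent_cpow (h1 : 1 ≤ a) (h2 : a ≤ 2) :
    IsLevyExponent fun z : ℝ => (-(Complex.I * z)) ^ (a : ℂ) := by
  have hinv (z : ℝ) : Tendsto (fun h : ℝ => Complex.exp ((-h : ℝ) * z * Complex.I + (h ^ 2 : ℝ)))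
      (𝓝[>] 0) (𝓝 1) :=
    tendsto_nhdsWithin_of_tendsto_nhds (Continuous.tendsto' (by fun_prop) _ _ (by simp))
  have hcancel {h : ℝ} (z : ℝ) : Complex.exp ((-h : ℝ) * z * Complex.I + (h ^ 2 : ℝ)) *
      Complex.exp (h * z * Complex.I + (-h ^ 2 : ℝ)) = 1 := by
    rw [← Complex.exp_add, ← Complex.exp_zero]
    push_cast
    ring_nf
  refine .of_tendsto (l := 𝓝[>] (0 : ℝ)) (eventually_mem_nhdsWithin.mono fun h hh => ?_)
    fun z => by
      simpa only [one_mul] using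
        (hinv z).mul (tendsto_inv_rpow_mul_one_sub_cexp_cpow (zero_lt_one.trans_le h1) z)
  have hpd := (isPositiveDefinite_cexp_mul_I_add h (-h ^ 2)).add_mul_one_sub_cpow
    (isPositiveDefinite_cexp_mul_I_add (-h) (h ^ 2)) hcancel
    (norm_cexp_mul_I_sub_sq_lt_one (Set.mem_Ioi.1 hh).ne') h1 h2
  have hscale : 0 ≤ h⁻¹ ^ a := Real.rpow_nonneg (inv_nonneg.2 (Set.mem_Ioi.1 hh).le) a
  simpa [mul_left_comm] using (hpd.isLevyExponent_sub a).const_mul hscale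

end Stable

/-! ### The symbol of the Riesz–Feller derivative -/

theorem exists_nonneg_cos_sin_combination {θ η : ℝ} (hη : |η| ≤ θ) (hθ : θ < Real.pi / 2) :
    ∃ c d : ℝ, 0 ≤ c ∧ 0 ≤ d ∧ (c + d) * Real.cos θ = Real.cos η ∧
      (c - d) * Real.sin θ = Real.sin η := by
  obtain ⟨hl, hr⟩ := abs_le.1 hη
  rcases ((abs_nonneg η).trans hη).eq_or_lt with rfl | hθ0
  · exact ⟨1, 0, zero_le_one, le_rfl, by simp [abs_nonpos_iff.1 hη]⟩
  have hsin : 0 < Real.sin θ := Real.sin_pos_of_pos_of_lt_pi hθ0 (by linarith)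
  have hcos : 0 < Real.cos θ := Real.cos_pos_of_mem_Ioo ⟨by linarith, hθ⟩
  have hadd : 0 ≤ Real.sin (θ + η) :=
    Real.sin_nonneg_of_nonneg_of_le_pi (by linarith) (by linarith)
  have hsub : 0 ≤ Real.sin (θ - η) :=
    Real.sin_nonneg_of_nonneg_of_le_pi (by linarith) (by linarith)
  refine ⟨Real.sin (θ + η) / (2 * Real.sin θ * Real.cos θ),
    Real.sin (θ - η) / (2 * Real.sin θ * Real.cos θ), by positivity, by positivity, ?_, ?_⟩ <;>
  · rw [Real.sin_add, Real.sin_sub]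
    field_simp
    ring

theorem min_two_sub_lt_one {a : ℝ} (ha : a ≠ 1) : min a (2 - a) < 1 := by
  rcases ha.lt_or_gt with h | h
  · exact min_lt_of_left_lt h
  · exact min_lt_of_right_lt (by linarith)

theorem measurable_sign : Measurable Real.sign :=
  .ite measurableSet_Iio measurable_const (.ite measurableSet_Ioi measurable_const measurable_const)

/-- The Fourier symbol `|z|^a exp (-iδ(π/2) sgn z)` of the operator `-D_δ^a`, with the exponential
written exactly as in `G1`. -/
noncomputable def fellerSymbol (a δ z : ℝ) : ℂ :=
  ((|z| ^ a : ℝ) : ℂ) *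
    Complex.exp (-(Complex.I * (δ : ℂ) * ((Real.pi / 2 : ℝ) : ℂ) * ((Real.sign z : ℝ) : ℂ)))

namespace fellerSymbol

variable {a δ : ℝ}

theorem measurable : Measurable (fellerSymbol a δ) := by
  have := measurable_sign
  unfold fellerSymbol
  fun_prop

theorem eq_mul_exp_mul_I (a δ z : ℝ) : fellerSymbol a δ z =
    ((|z| ^ a : ℝ) : ℂ) * Complex.exp ((-(Real.sign z * (δ * (Real.pi / 2))) : ℝ) * Complex.I) := by
  rw [fellerSymbol]
  congr 2
  push_cast
  ring

theorem eq_cos_sub_sin (ha : a ≠ 0) (δ z : ℝ) :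
    fellerSymbol a δ z = ((|z| ^ a : ℝ) : ℂ) * (Real.cos (δ * (Real.pi / 2)) -
      Real.sign z * Real.sin (δ * (Real.pi / 2)) * Complex.I) := by
  rw [eq_mul_exp_mul_I, Complex.exp_mul_I, ← Complex.ofReal_cos, ← Complex.ofReal_sin]
  rcases lt_trichotomy z 0 with hz | rfl | hz
  · simp [Real.sign_of_neg hz]
  · simp [Real.zero_rpow ha]
  · simp [Real.sign_of_pos hz, sub_eq_add_neg]

theorem cpow_eq (ha : a ≠ 0) (z : ℝ) : (-(Complex.I * z)) ^ (a : ℂ) = fellerSymbol a a z := by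
  rw [Complex.cpow_ofReal, eq_cos_sub_sin ha, norm_neg, norm_mul, Complex.norm_I, one_mul,
    Complex.norm_real, Real.norm_eq_abs]
  rcases lt_trichotomy z 0 with hz | rfl | hz
  · have harg : Complex.arg (-(Complex.I * z)) = Real.pi / 2 := by
      rw [mul_comm, neg_mul_eq_neg_mul, ← Complex.ofReal_neg,
        Complex.arg_real_mul _ (neg_pos.2 hz), Complex.arg_I]
    simp [harg, Real.sign_of_neg hz, mul_comm]
  · simp [Real.zero_rpow ha]
  · have harg : Complex.arg (-(Complex.I * z)) = -(Real.pi / 2) := by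
      rw [mul_comm, neg_mul_eq_mul_neg, Complex.arg_real_mul _ hz, Complex.arg_neg_I]
    simp [harg, Real.sign_of_pos hz, mul_comm, sub_eq_add_neg]

theorem sub_two (ha : a ≠ 0) (δ z : ℝ) : fellerSymbol a (δ - 2) z = -fellerSymbol a δ z := by
  have hangle : (δ - 2) * (Real.pi / 2) = δ * (Real.pi / 2) - Real.pi := by ring
  rw [eq_cos_sub_sin ha, eq_cos_sub_sin ha, hangle, Real.cos_sub_pi, Real.sin_sub_pi]
  push_cast
  ring

theorem neg_skewness (a δ z : ℝ) : fellerSymbol a (-δ) z = fellerSymbol a δ (-z) := by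
  simp [fellerSymbol, Real.sign_neg]

theorem norm_eq (a δ z : ℝ) : ‖fellerSymbol a δ z‖ = |z| ^ a := by
  rw [eq_mul_exp_mul_I, norm_mul, Complex.norm_exp_ofReal_mul_I, mul_one,
    Complex.norm_of_nonneg (by positivity)]

theorem re_eq (ha : a ≠ 0) (δ z : ℝ) :
    (fellerSymbol a δ z).re = |z| ^ a * Real.cos (δ * (Real.pi / 2)) := by
  simp [eq_cos_sub_sin ha, -Complex.ofReal_mul, -Complex.ofReal_cos, -Complex.ofReal_sin]

theorem map_zero (ha : a ≠ 0) (δ : ℝ) : fellerSymbol a δ 0 = 0 := by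
  simp [fellerSymbol, Real.zero_rpow ha]

theorem continuousAt_zero (ha : 0 < a) (δ : ℝ) : ContinuousAt (fellerSymbol a δ) 0 := by
  have habs : Tendsto (fun z : ℝ => |z| ^ a) (𝓝 0) (𝓝 0) :=
    (continuous_abs.rpow_const fun _ => Or.inr ha.le).tendsto' 0 0 (by simp [ha.ne'])
  rw [ContinuousAt, map_zero ha.ne', tendsto_zero_iff_norm_tendsto_zero]
  simpa only [norm_eq] using habs

theorem isLevyExponent_neg_self (h0 : 0 < a) (h1 : a ≤ 1) :
    IsLevyExponent fun z => -fellerSymbol a a z := by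
  simpa only [cpow_eq h0.ne'] using isLevyExponent_neg_cpow h0 h1

theorem isLevyExponent_neg_two_sub (h1 : 1 ≤ a) (h2 : a ≤ 2) :
    IsLevyExponent fun z => -fellerSymbol a (2 - a) z := by
  have ha : a ≠ 0 := by linarith
  have h := (isLevyExponent_cpow h1 h2).comp (negAddMonoidHom : ℝ →+ ℝ)
  simpa only [cpow_eq ha, negAddMonoidHom_apply, ← neg_skewness, ← sub_two ha, sub_sub_cancel_left]
    using h

theorem isLevyExponent_neg_min (h0 : 0 < a) (h2 : a ≤ 2) :
    IsLevyExponent fun z => -fellerSymbol a (min a (2 - a)) z := by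
  rcases le_total a 1 with h1 | h1
  · simpa only [min_eq_left (show a ≤ 2 - a by linarith)] using isLevyExponent_neg_self h0 h1
  · simpa only [min_eq_right (show 2 - a ≤ a by linarith)] using isLevyExponent_neg_two_sub h1 h2

theorem exists_eq_add_reflection (ha : a ≠ 0) {θ : ℝ} (hδ : |δ| ≤ θ) (hθ : θ < 1) :
    ∃ c d : ℝ, 0 ≤ c ∧ 0 ≤ d ∧
      ∀ z, fellerSymbol a δ z = c * fellerSymbol a θ z + d * fellerSymbol a θ (-z) := by
  have hpi : 0 < Real.pi / 2 := Real.pi_div_two_pos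
  obtain ⟨c, d, hc, hd, hcos, hsin⟩ :=
    exists_nonneg_cos_sin_combination (θ := θ * (Real.pi / 2)) (η := δ * (Real.pi / 2))
      (by rw [abs_mul, abs_of_pos hpi]; gcongr) (mul_lt_of_lt_one_left hpi hθ)
  refine ⟨c, d, hc, hd, fun z => ?_⟩
  rw [eq_cos_sub_sin ha, eq_cos_sub_sin ha, eq_cos_sub_sin ha, abs_neg, Real.sign_neg, ← hcos,
    ← hsin]
  push_cast
  ring

theorem isLevyExponent_neg_of_ne_one (h0 : 0 < a) (h1 : a ≠ 1) (hδ : |δ| ≤ min a (2 - a)) :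
    IsLevyExponent fun z => -fellerSymbol a δ z := by
  have h2 : a ≤ 2 := by linarith [(abs_nonneg δ).trans hδ, min_le_right a (2 - a)]
  obtain ⟨c, d, hc, hd, hcd⟩ := exists_eq_add_reflection h0.ne' hδ (min_two_sub_lt_one h1)
  have hmin := isLevyExponent_neg_min h0 h2
  simpa only [hcd, neg_add, ← mul_neg, negAddMonoidHom_apply] using
    (hmin.const_mul hc).add ((hmin.comp (negAddMonoidHom : ℝ →+ ℝ)).const_mul hd)

theorem isLevyExponent_neg (h0 : 0 < a) (hδ : |δ| ≤ min a (2 - a)) :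
    IsLevyExponent fun z => -fellerSymbol a δ z := by
  rcases eq_or_ne a 1 with rfl | h1
  · have hδ1 : |δ| ≤ 1 := hδ.trans (min_le_left _ _)
    refine .of_tendsto (l := 𝓝[<] (1 : ℝ)) (φ := fun b z => -fellerSymbol b (δ * b) z) ?_
      fun z => ?_
    · filter_upwards [Ioo_mem_nhdsLT zero_lt_one] with b hb
      refine isLevyExponent_neg_of_ne_one hb.1 hb.2.ne ?_
      rw [min_eq_left (by linarith [hb.2]), abs_mul, abs_of_pos hb.1]
      exact mul_le_of_le_one_left hb.1.le hδ1
    · have hpow : ContinuousAt (fun b : ℝ => |z| ^ b) 1 :=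
        Real.continuousAt_const_rpow' one_ne_zero
      have hsymbol : ContinuousAt (fun b : ℝ => -fellerSymbol b (δ * b) z) 1 := by
        unfold fellerSymbol
        fun_prop
      simpa using hsymbol.tendsto.mono_left nhdsWithin_le_nhds
  · exact isLevyExponent_neg_of_ne_one h0 h1 hδ

end fellerSymbol

/-! ### Stable densities -/

theorem integrable_exp_neg_mul_norm_rpow {E : Type*} [NormedAddCommGroup E] [NormedSpace ℝ E]
    [FiniteDimensional ℝ E] [MeasurableSpace E] [BorelSpace E] [Nontrivial E] (μ : Measure E)
    [μ.IsAddHaarMeasure] {a b : ℝ} (ha : 0 < a) (hb : 0 < b) :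
    Integrable (fun x : E => Real.exp (-b * ‖x‖ ^ a)) μ := by
  rw [integrable_fun_norm_addHaar μ (f := fun r : ℝ => Real.exp (-b * r ^ a))]
  simpa only [smul_eq_mul, Real.rpow_natCast] using integrableOn_rpow_mul_exp_neg_mul_rpow
    (s := (Module.finrank ℝ E - 1 : ℕ)) (neg_one_lt_zero.trans_le (Nat.cast_nonneg _)) ha hb

/-- The characteristic function `exp (-t|z|^a exp (-iδ(π/2) sgn z))` of the stable law with density
`G1 a δ t`. -/
noncomputable def stableCharFun (a δ t z : ℝ) : ℂ := Complex.exp (-(t * fellerSymbol a δ z))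

namespace stableCharFun

variable {a δ t : ℝ}

theorem isPositiveDefinite (ha : 0 < a) (hδ : |δ| ≤ min a (2 - a)) (ht : 0 ≤ t) :
    IsPositiveDefinite (stableCharFun a δ t) := by
  simpa only [mul_neg] using! fellerSymbol.isLevyExponent_neg ha hδ t ht

theorem measurable : Measurable (stableCharFun a δ t) := by
  have := fellerSymbol.measurable (a := a) (δ := δ)
  unfold stableCharFun
  fun_prop

theorem map_zero (ha : a ≠ 0) : stableCharFun a δ t 0 = 1 := by
  simp [stableCharFun, fellerSymbol.map_zero ha]

theorem continuousAt_zero (ha : 0 < a) : ContinuousAt (stableCharFun a δ t) 0 :=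
  ((fellerSymbol.continuousAt_zero ha δ).const_mul (t : ℂ)).neg.cexp

theorem norm_eq (ha : a ≠ 0) (z : ℝ) :
    ‖stableCharFun a δ t z‖ = Real.exp (-(t * Real.cos (δ * (Real.pi / 2))) * ‖z‖ ^ a) := by
  rw [stableCharFun, Complex.norm_exp, Complex.neg_re, Complex.re_ofReal_mul, fellerSymbol.re_eq ha,
    Real.norm_eq_abs]
  ring_nf

theorem integrable (ha : 0 < a) (hδ : |δ| < 1) (ht : 0 < t) : Integrable (stableCharFun a δ t) := by
  obtain ⟨hl, hr⟩ := abs_lt.1 hδ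
  have hpi : 0 < Real.pi / 2 := Real.pi_div_two_pos
  have hcos : 0 < Real.cos (δ * (Real.pi / 2)) :=
    Real.cos_pos_of_mem_Ioo ⟨by nlinarith, by nlinarith⟩
  refine (integrable_exp_neg_mul_norm_rpow volume ha (mul_pos ht hcos)).mono'
    measurable.aestronglyMeasurable (ae_of_all _ fun z => (norm_eq ha.ne' z).le)

end stableCharFun

theorem G1_eq_smul_fourier (a δ t x : ℝ) :
    G1 a δ t x = (1 / (2 * Real.pi) : ℝ) • 𝓕 (stableCharFun a δ t) (x / (2 * Real.pi)) := by
  rw [G1, Real.fourier_eq']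
  refine congrArg _ (integral_congr_ae (ae_of_all _ fun z => ?_))
  have hphase : -2 * Real.pi * inner ℝ z (x / (2 * Real.pi)) = -(z * x) := by
    simp only [RCLike.inner_apply, conj_trivial]
    field_simp
  simp only [hphase, stableCharFun, fellerSymbol, smul_eq_mul, ← Complex.exp_add]
  push_cast
  ring_nf

theorem stmt5_general (a δ : ℝ) (ha : 0 < a) (hδ : |δ| ≤ min a (2 - a)) (hδ1 : |δ| < 1) (t : ℝ)
    (ht : 0 < t) : (∀ x : ℝ, 0 ≤ G1 a δ t x) ∧ (∫ x : ℝ, G1 a δ t x) = 1 := by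
  have hint : Integrable (stableCharFun a δ t) := stableCharFun.integrable ha hδ1 ht
  have hfourier (w : ℝ) : 0 ≤ 𝓕 (stableCharFun a δ t) w :=
    (stableCharFun.isPositiveDefinite ha hδ ht.le).fourier_nonneg stableCharFun.measurable hint w
  have htotal : ∫ w, 𝓕 (stableCharFun a δ t) w = 1 := by
    rw [integral_fourier_eq_of_nonneg hint (stableCharFun.continuousAt_zero ha) hfourier,
      stableCharFun.map_zero ha.ne']
  have hpi : 0 < 2 * Real.pi := Real.two_pi_pos
  simp only [G1_eq_smul_fourier]
  refine ⟨fun x => smul_nonneg (by positivity) (hfourier _), ?_⟩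
  rw [integral_smul, Measure.integral_comp_div, htotal, abs_of_pos hpi, smul_smul, one_div,
    inv_mul_cancel₀ hpi.ne', one_smul]

theorem stmt5 (a δ : ℝ) (ha : 0 < a ∧ a ≤ 2 ∧ a ≠ 1)
    (hδ : |δ| ≤ min a (2 - a)) (t : ℝ) (ht : 0 < t) :
    (∀ x : ℝ, 0 ≤ G1 a δ t x) ∧ (∫ x : ℝ, G1 a δ t x) = 1 :=
  stmt5_general a δ ha.1 hδ (hδ.trans_lt (min_two_sub_lt_one ha.2.2)) t ht
end

section
/- Let T > 0 and let g : [0,T] → ℝ_+ be a nonnegative function with ∫_0^T g(s) ds < ∞. Then there is a sequence (a_n)_{n∈ℕ} of nonnegative real numbers such that for all p ≥ 1, Σ_{n=1}^∞ (a_n)^{1/p} < ∞, and with the following property: if (f_n)_{n∈ℕ} is a sequence of nonnegative functions on [0,T] and k_1, k_2 ≥ 0 are such that for all n ≥ 1 and 0 ≤ t ≤ T, f_n(t) ≤ k_1 + ∫_0^t (k_2 + f_{n−1}(s)) g(t−s) ds, and if sup_{0≤s≤T} f_0(s) = c < ∞, then for all n ≥ 1 and t ∈ [0,T], f_n(t)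 ≤ k_1 + (k_1 + k_2) Σ_{i=1}^{n−1} a_i + (k_2 + c) a_n. In particular sup_{n≥0} sup_{0≤t≤T} f_n(t) < ∞, and if k_1 = k_2 = 0 then Σ_{n≥0} (f_n(t))^{1/p} converges uniformly on [0,T] for every p ≥ 1. -/
open MeasureTheory

/-!
Choose `l ≥ 0` so large that `∫₀ᵀ exp (-l s) g(s) ds ≤ r < 1`. In the weighted norm
`sup_t exp (-l t) |h t|`, convolution with `g` is then a contraction by the factor `r`, so that the
Picard inequality turns a bound `k₂ + f_n ≤ D exp (l t)` into
`k₂ + f_{n+1} ≤ (k₁ + k₂ + r D) exp (l t)`. Iterating this affine recursion gives the estimate with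
`a_n = exp (l T) rⁿ`.
-/

open Filter Set Topology

section ExponentialWeight

lemma tendsto_integral_exp_neg_mul_smul {E : Type*} [NormedAddCommGroup E] [NormedSpace ℝ E]
    {μ : Measure ℝ} {g : ℝ → E} (hμ : ∀ᵐ s ∂μ, 0 < s) (hg : Integrable g μ) :
    Tendsto (fun l : ℝ => ∫ s, Real.exp (-(l * s)) • g s ∂μ) atTop (𝓝 0) := by
  rw [← integral_zero ℝ E (μ := μ)]
  refine tendsto_integral_filter_of_dominated_convergence (fun s => ‖g s‖)
    (Eventually.of_forall fun l => ?_) ?_ hg.norm ?_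
  · have hexp : Continuous fun s : ℝ => Real.exp (-(l * s)) := by fun_prop
    exact hexp.aestronglyMeasurable.smul hg.aestronglyMeasurable
  · filter_upwards [eventually_ge_atTop 0] with l hl
    filter_upwards [hμ] with s hs
    rw [norm_smul, Real.norm_of_nonneg (Real.exp_nonneg _)]
    exact mul_le_of_le_one_left (norm_nonneg _)
      (Real.exp_le_one_iff.2 (neg_nonpos.2 (mul_nonneg hl hs.le)))
  · filter_upwards [hμ] with s hs
    have hexp : Tendsto (fun l : ℝ => Real.exp (-(l * s))) atTop (𝓝 0) :=
      Real.tendsto_exp_neg_atTop_nhds_zero.comp (tendsto_id.atTop_mul_const hs)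
    simpa only [zero_smul] using hexp.smul_const (g s)

lemma exists_nonneg_intervalIntegral_exp_neg_mul_lt {g : ℝ → ℝ} {T r : ℝ} (hT : 0 ≤ T)
    (hg : IntervalIntegrable g volume 0 T) (hr : 0 < r) :
    ∃ l : ℝ, 0 ≤ l ∧ ∫ s in (0 : ℝ)..T, Real.exp (-(l * s)) * g s < r := by
  have hlim := tendsto_integral_exp_neg_mul_smul
    ((ae_restrict_mem measurableSet_Ioc).mono fun _ hs => hs.1) hg.1
  obtain ⟨l, hl, hlr⟩ := ((eventually_ge_atTop 0).and (hlim.eventually_lt_const hr)).exists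
  exact ⟨l, hl, by simpa only [intervalIntegral.integral_of_le hT, smul_eq_mul] using hlr⟩

lemma intervalIntegral_exp_mul_comp_sub (g : ℝ → ℝ) (l t : ℝ) :
    ∫ s in (0 : ℝ)..t, Real.exp (l * s) * g (t - s) =
      Real.exp (l * t) * ∫ s in (0 : ℝ)..t, Real.exp (-(l * s)) * g s := by
  have hexp (s : ℝ) : Real.exp (l * s) = Real.exp (l * t) * Real.exp (-(l * (t - s))) := by
    rw [← Real.exp_add]
    ring_nf
  calc ∫ s in (0 : ℝ)..t, Real.exp (l * s) * g (t - s)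
      = ∫ s in (0 : ℝ)..t, Real.exp (l * t) * (Real.exp (-(l * (t - s))) * g (t - s)) :=
        intervalIntegral.integral_congr fun s _ => by rw [← mul_assoc, ← hexp]
    _ = Real.exp (l * t) * ∫ s in (0 : ℝ)..t, Real.exp (-(l * s)) * g s := by
        rw [intervalIntegral.integral_const_mul,
          intervalIntegral.integral_comp_sub_left (fun s => Real.exp (-(l * s)) * g s),
          sub_self, sub_zero]

variable {g h : ℝ → ℝ} {l t D : ℝ}

lemma intervalIntegral_mul_comp_sub_le (ht : 0 ≤ t) (hg : ∀ s ∈ Icc 0 t, 0 ≤ g s)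
    (hgint : IntervalIntegrable g volume 0 t) (h_nonneg : ∀ s ∈ Icc 0 t, 0 ≤ h s)
    (h_le : ∀ s ∈ Icc 0 t, h s ≤ D * Real.exp (l * s)) :
    ∫ s in (0 : ℝ)..t, h s * g (t - s) ≤
      D * Real.exp (l * t) * ∫ s in (0 : ℝ)..t, Real.exp (-(l * s)) * g s := by
  have hg' : ∀ s ∈ Ioc 0 t, 0 ≤ g (t - s) := fun s hs =>
    hg _ ⟨sub_nonneg.2 hs.2, sub_le_self _ hs.1.le⟩
  have hmajorant : IntervalIntegrable (fun s => D * (Real.exp (l * s) * g (t - s))) volume 0 t := by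
    have hcomp : IntervalIntegrable (fun s => g (t - s)) volume 0 t := by
      simpa only [sub_zero, sub_self] using (hgint.comp_sub_left t).symm
    exact (hcomp.continuousOn_mul (by fun_prop)).const_mul D
  calc ∫ s in (0 : ℝ)..t, h s * g (t - s)
      ≤ ∫ s in (0 : ℝ)..t, D * (Real.exp (l * s) * g (t - s)) := by
        rw [intervalIntegral.integral_of_le ht, intervalIntegral.integral_of_le ht]
        -- `h` may fail to be measurable, so only the majorant is known to be integrable.
        refine integral_mono_of_nonneg ?_ hmajorant.1 ?_
        · filter_upwards [ae_restrict_mem measurableSet_Ioc] with s hs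
          exact mul_nonneg (h_nonneg s (Ioc_subset_Icc_self hs)) (hg' s hs)
        · filter_upwards [ae_restrict_mem measurableSet_Ioc] with s hs
          rw [← mul_assoc]
          exact mul_le_mul_of_nonneg_right (h_le s (Ioc_subset_Icc_self hs)) (hg' s hs)
    _ = D * Real.exp (l * t) * ∫ s in (0 : ℝ)..t, Real.exp (-(l * s)) * g s := by
        rw [intervalIntegral.integral_const_mul, intervalIntegral_exp_mul_comp_sub, mul_assoc]

lemma intervalIntegral_mul_comp_sub_le_of_integral_le {T r : ℝ} (ht : t ∈ Icc 0 T)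
    (hg : ∀ s ∈ Icc 0 T, 0 ≤ g s) (hgint : IntervalIntegrable g volume 0 T)
    (hr : ∫ s in (0 : ℝ)..T, Real.exp (-(l * s)) * g s ≤ r)
    (hD : 0 ≤ D) (h_nonneg : ∀ s ∈ Icc 0 T, 0 ≤ h s)
    (h_le : ∀ s ∈ Icc 0 T, h s ≤ D * Real.exp (l * s)) :
    ∫ s in (0 : ℝ)..t, h s * g (t - s) ≤ r * D * Real.exp (l * t) := by
  have hsub : Icc 0 t ⊆ Icc 0 T := Icc_subset_Icc_right ht.2
  have hgint_t : IntervalIntegrable g volume 0 t :=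
    hgint.mono_set (by simpa only [uIcc_of_le ht.1, uIcc_of_le (ht.1.trans ht.2)] using hsub)
  have hmono : ∫ s in (0 : ℝ)..t, Real.exp (-(l * s)) * g s ≤
      ∫ s in (0 : ℝ)..T, Real.exp (-(l * s)) * g s := by
    refine intervalIntegral.integral_mono_interval le_rfl ht.1 ht.2 ?_
      (hgint.continuousOn_mul (by fun_prop))
    filter_upwards [ae_restrict_mem measurableSet_Ioc] with s hs
    exact mul_nonneg (Real.exp_nonneg _) (hg s (Ioc_subset_Icc_self hs))
  calc ∫ s in (0 : ℝ)..t, h s * g (t - s)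
      ≤ D * Real.exp (l * t) * ∫ s in (0 : ℝ)..t, Real.exp (-(l * s)) * g s :=
        intervalIntegral_mul_comp_sub_le ht.1 (fun s hs => hg s (hsub hs)) hgint_t
          (fun s hs => h_nonneg s (hsub hs)) (fun s hs => h_le s (hsub hs))
    _ ≤ D * Real.exp (l * t) * r := by gcongr; exact hmono.trans hr
    _ = r * D * Real.exp (l * t) := by ring

end ExponentialWeight

section AffineRecursion

/-- The solution of the affine recursion `D (n + 1) = k + r * D n`, `D 0 = d`, in closed form. It
bounds the weighted norm of the `n`-th Picard iterate. -/
noncomputable def affineIterate (r k d : ℝ) (n : ℕ) : ℝ :=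
  k * ∑ i ∈ Finset.range n, r ^ i + d * r ^ n

variable {r k d : ℝ}

@[simp]
lemma affineIterate_zero : affineIterate r k d 0 = d := by
  simp [affineIterate]

lemma affineIterate_succ (n : ℕ) :
    affineIterate r k d (n + 1) = k + r * affineIterate r k d n := by
  simp only [affineIterate, geom_sum_succ, pow_succ]
  ring

lemma mul_affineIterate (n : ℕ) :
    r * affineIterate r k d n = k * ∑ i ∈ Finset.Icc 1 n, r ^ i + d * r ^ (n + 1) := by
  have hshift : ∑ i ∈ Finset.Icc 1 n, r ^ i = r * ∑ i ∈ Finset.range n, r ^ i := by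
    rw [← Finset.Ico_add_one_right_eq_Icc, Finset.sum_Ico_eq_sum_range, Finset.mul_sum]
    simp only [Nat.add_sub_cancel, pow_add, pow_one]
  rw [hshift, affineIterate]
  ring

lemma affineIterate_nonneg (hr : 0 ≤ r) (hk : 0 ≤ k) (hd : 0 ≤ d) (n : ℕ) :
    0 ≤ affineIterate r k d n := by
  unfold affineIterate
  positivity

lemma affineIterate_le (hr₀ : 0 ≤ r) (hr₁ : r < 1) (hk : 0 ≤ k) (hd : 0 ≤ d) (n : ℕ) :
    affineIterate r k d n ≤ k * (1 - r)⁻¹ + d := by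
  have hgeom : ∑ i ∈ Finset.range n, r ^ i ≤ (1 - r)⁻¹ :=
    (summable_geometric_of_lt_one hr₀ hr₁).sum_le_tsum _ (fun i _ => pow_nonneg hr₀ i)
      |>.trans_eq (tsum_geometric_of_lt_one hr₀ hr₁)
  exact add_le_add (mul_le_mul_of_nonneg_left hgeom hk)
    (mul_le_of_le_one_right hd (pow_le_one₀ hr₀ hr₁.le))

lemma add_le_affineIterate_mul {α : Type*} {S : Set α} {f : ℕ → α → ℝ} {w : α → ℝ} {k₁ k₂ c : ℝ}
    (hr : 0 ≤ r) (hk : 0 ≤ k₁ + k₂) (hc : 0 ≤ k₂ + c) (hw : ∀ x ∈ S, 1 ≤ w x)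
    (hf₀ : ∀ x ∈ S, f 0 x ≤ c)
    (hstep : ∀ n D, 0 ≤ D → (∀ x ∈ S, k₂ + f n x ≤ D * w x) →
      ∀ x ∈ S, f (n + 1) x ≤ k₁ + r * D * w x) (n : ℕ) :
    ∀ x ∈ S, k₂ + f n x ≤ affineIterate r (k₁ + k₂) (k₂ + c) n * w x := by
  induction n with
  | zero =>
    intro x hx
    rw [affineIterate_zero]
    exact (add_le_add_right (hf₀ x hx) k₂).trans (le_mul_of_one_le_right hc (hw x hx))
  | succ n ih =>
    intro x hx
    have hsucc := hstep n _ (affineIterate_nonneg hr hk hc n) ih x hx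
    have hweight : k₁ + k₂ ≤ (k₁ + k₂) * w x := le_mul_of_one_le_right hk (hw x hx)
    rw [affineIterate_succ, add_mul]
    linarith

lemma le_add_sum_geometric {α : Type*} {S : Set α} {f : ℕ → α → ℝ} {w : α → ℝ} {k₁ k₂ c W : ℝ}
    (hr : 0 ≤ r) (hk : 0 ≤ k₁ + k₂) (hc : 0 ≤ k₂ + c) (hw : ∀ x ∈ S, 1 ≤ w x)
    (hwW : ∀ x ∈ S, w x ≤ W) (hf₀ : ∀ x ∈ S, f 0 x ≤ c)
    (hstep : ∀ n D, 0 ≤ D → (∀ x ∈ S, k₂ + f n x ≤ D * w x) →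
      ∀ x ∈ S, f (n + 1) x ≤ k₁ + r * D * w x) (n : ℕ) (x : α) (hx : x ∈ S) :
    f (n + 1) x ≤ k₁ + (k₁ + k₂) * (∑ i ∈ Finset.Icc 1 n, W * r ^ i)
      + (k₂ + c) * (W * r ^ (n + 1)) := by
  have hD := affineIterate_nonneg hr hk hc n
  calc f (n + 1) x
      ≤ k₁ + r * affineIterate r (k₁ + k₂) (k₂ + c) n * w x :=
        hstep n _ hD (add_le_affineIterate_mul hr hk hc hw hf₀ hstep n) x hx
    _ ≤ k₁ + r * affineIterate r (k₁ + k₂) (k₂ + c) n * W := by gcongr; exact hwW x hx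
    _ = _ := by rw [mul_affineIterate, ← Finset.mul_sum]; ring

end AffineRecursion

section GeometricDecay

variable {r C q : ℝ}

lemma summable_mul_geometric_rpow (hC : 0 ≤ C) (hr₀ : 0 ≤ r) (hr₁ : r < 1) (hq : 0 < q) :
    Summable fun n : ℕ => (C * r ^ n) ^ q := by
  have hpow (n : ℕ) : (C * r ^ n) ^ q = C ^ q * (r ^ q) ^ n := by
    rw [Real.mul_rpow hC (pow_nonneg hr₀ n), Real.rpow_pow_comm hr₀]
  simp_rw [hpow]
  exact (summable_geometric_of_lt_one (Real.rpow_nonneg hr₀ q)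
    (Real.rpow_lt_one hr₀ hr₁ hq)).mul_left _

lemma tendstoUniformlyOn_sum_rpow_of_le_geometric {α : Type*} {S : Set α} {f : ℕ → α → ℝ}
    (hC : 0 ≤ C) (hr₀ : 0 ≤ r) (hr₁ : r < 1) (hq : 0 < q)
    (hf : ∀ n, ∀ x ∈ S, 0 ≤ f n x) (hfC : ∀ n, ∀ x ∈ S, f n x ≤ C * r ^ n) :
    TendstoUniformlyOn (fun N x => ∑ i ∈ Finset.range N, f i x ^ q) (fun x => ∑' i, f i x ^ q)
      atTop S := by
  refine tendstoUniformlyOn_tsum_nat (summable_mul_geometric_rpow hC hr₀ hr₁ hq) fun n x hx => ?_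
  rw [Real.norm_of_nonneg (Real.rpow_nonneg (hf n x hx) q)]
  exact Real.rpow_le_rpow (hf n x hx) (hfC n x hx) hq.le

end GeometricDecay

theorem stmt10_general {T r : ℝ} (hT : 0 ≤ T) {g : ℝ → ℝ} (hg : ∀ s ∈ Icc (0 : ℝ) T, 0 ≤ g s)
    (hgint : IntegrableOn g (Icc (0 : ℝ) T)) (hr₀ : 0 < r) (hr₁ : r < 1) :
    ∃ C : ℝ, 0 ≤ C ∧
      ∀ (f : ℕ → ℝ → ℝ) (k₁ k₂ c : ℝ), 0 ≤ k₁ → 0 ≤ k₂ →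
        (∀ n, ∀ t ∈ Icc (0 : ℝ) T, 0 ≤ f n t) →
        (∀ n, 1 ≤ n → ∀ t ∈ Icc (0 : ℝ) T,
          f n t ≤ k₁ + ∫ s in (0 : ℝ)..t, (k₂ + f (n - 1) s) * g (t - s)) →
        c ∈ upperBounds (f 0 '' Icc (0 : ℝ) T) →
        ((∀ n, 1 ≤ n → ∀ t ∈ Icc (0 : ℝ) T,
            f n t ≤ k₁ + (k₁ + k₂) * (∑ i ∈ Finset.Icc 1 (n - 1), C * r ^ i)
              + (k₂ + c) * (C * r ^ n)) ∧
          (∃ B : ℝ, ∀ n, ∀ t ∈ Icc (0 : ℝ) T, f n t ≤ B) ∧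
          (k₁ = 0 → k₂ = 0 → ∀ p : ℝ, 0 < p →
            TendstoUniformlyOn (fun N t => ∑ i ∈ Finset.range N, f i t ^ (1 / p))
              (fun t => ∑' i, f i t ^ (1 / p)) atTop (Icc (0 : ℝ) T))) := by
  have hgint' := (intervalIntegrable_iff_integrableOn_Icc_of_le hT).2 hgint
  obtain ⟨l, hl, hlr⟩ := exists_nonneg_intervalIntegral_exp_neg_mul_lt hT hgint' hr₀
  have hw_one : ∀ t ∈ Icc 0 T, 1 ≤ Real.exp (l * t) := fun t ht =>
    Real.one_le_exp (mul_nonneg hl ht.1)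
  have hw_le : ∀ t ∈ Icc 0 T, Real.exp (l * t) ≤ Real.exp (l * T) := fun t ht =>
    Real.exp_le_exp.2 (mul_le_mul_of_nonneg_left ht.2 hl)
  refine ⟨Real.exp (l * T), Real.exp_nonneg _, fun f k₁ k₂ c hk₁ hk₂ hf hrec hc => ?_⟩
  have hf₀ : ∀ t ∈ Icc 0 T, f 0 t ≤ c := fun t ht => hc (mem_image_of_mem _ ht)
  have hc₀ : 0 ≤ c := (hf 0 0 (left_mem_Icc.2 hT)).trans (hf₀ 0 (left_mem_Icc.2 hT))
  have hstep (n : ℕ) (D : ℝ) (hD : 0 ≤ D)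
      (hfD : ∀ t ∈ Icc 0 T, k₂ + f n t ≤ D * Real.exp (l * t)) (t : ℝ) (ht : t ∈ Icc 0 T) :
      f (n + 1) t ≤ k₁ + r * D * Real.exp (l * t) :=
    (hrec (n + 1) n.succ_pos t ht).trans <| add_le_add_right
      (intervalIntegral_mul_comp_sub_le_of_integral_le ht hg hgint' hlr.le hD
        (fun s hs => add_nonneg hk₂ (hf n s hs)) hfD) k₁
  have hk := add_nonneg hk₁ hk₂
  have hd := add_nonneg hk₂ hc₀
  have hiterate (n : ℕ) (t : ℝ) (ht : t ∈ Icc 0 T) :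
      f n t ≤ affineIterate r (k₁ + k₂) (k₂ + c) n * Real.exp (l * T) :=
    calc f n t ≤ k₂ + f n t := le_add_of_nonneg_left hk₂
      _ ≤ affineIterate r (k₁ + k₂) (k₂ + c) n * Real.exp (l * t) :=
        add_le_affineIterate_mul hr₀.le hk hd hw_one hf₀ hstep n t ht
      _ ≤ affineIterate r (k₁ + k₂) (k₂ + c) n * Real.exp (l * T) :=
        mul_le_mul_of_nonneg_left (hw_le t ht) (affineIterate_nonneg hr₀.le hk hd n)
  refine ⟨fun n hn => ?_, ⟨_, fun n t ht => (hiterate n t ht).trans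
    (mul_le_mul_of_nonneg_right (affineIterate_le hr₀.le hr₁ hk hd n) (Real.exp_nonneg _))⟩, ?_⟩
  · obtain ⟨m, rfl⟩ := Nat.exists_eq_succ_of_ne_zero (Nat.one_le_iff_ne_zero.1 hn)
    exact le_add_sum_geometric hr₀.le hk hd hw_one hw_le hf₀ hstep m
  · rintro rfl rfl p hp
    refine tendstoUniformlyOn_sum_rpow_of_le_geometric (mul_nonneg hc₀ (Real.exp_nonneg (l * T)))
      hr₀.le hr₁ (one_div_pos.2 hp) hf fun n t ht => (hiterate n t ht).trans_eq ?_
    simp only [affineIterate, add_zero, zero_add, zero_mul]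
    ring

/-- Gronwall-type lemma (Dalang, Lemma 15). -/
theorem stmt10 (T : ℝ) (hT : 0 < T) (g : ℝ → ℝ)
    (hg : ∀ s ∈ Set.Icc (0 : ℝ) T, 0 ≤ g s)
    (hgint : IntegrableOn g (Set.Icc (0 : ℝ) T)) :
    ∃ a : ℕ → ℝ, (∀ n, 0 ≤ a n) ∧
      (∀ p : ℝ, 1 ≤ p → Summable fun n => a n ^ (1 / p)) ∧
      ∀ (f : ℕ → ℝ → ℝ) (k₁ k₂ c : ℝ), 0 ≤ k₁ → 0 ≤ k₂ →
        (∀ n, ∀ t ∈ Set.Icc (0 : ℝ) T, 0 ≤ f n t) →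
        (∀ n, 1 ≤ n → ∀ t ∈ Set.Icc (0 : ℝ) T,
          f n t ≤ k₁ + ∫ s in (0 : ℝ)..t, (k₂ + f (n - 1) s) * g (t - s)) →
        IsLUB (f 0 '' Set.Icc (0 : ℝ) T) c →
        ((∀ n, 1 ≤ n → ∀ t ∈ Set.Icc (0 : ℝ) T,
            f n t ≤ k₁ + (k₁ + k₂) * (∑ i ∈ Finset.Icc 1 (n - 1), a i) + (k₂ + c) * a n) ∧
          (∃ C : ℝ, ∀ n, ∀ t ∈ Set.Icc (0 : ℝ) T, f n t ≤ C) ∧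
          (k₁ = 0 → k₂ = 0 → ∀ p : ℝ, 1 ≤ p →
            TendstoUniformlyOn (fun N t => ∑ i ∈ Finset.range N, f i t ^ (1 / p))
              (fun t => ∑' i, f i t ^ (1 / p)) Filter.atTop (Set.Icc (0 : ℝ) T))) := by
  obtain ⟨C, hC, h⟩ := stmt10_general hT.le hg hgint (one_half_pos (α := ℝ)) one_half_lt_one
  exact ⟨fun n => C * (1 / 2) ^ n, fun n => by positivity,
    fun p hp => summable_mul_geometric_rpow hC (by norm_num) one_half_lt_one (by positivity),
    fun f k₁ k₂ c hk₁ hk₂ hf hrec hc => (h f k₁ k₂ c hk₁ hk₂ hf hrec hc.1).imp_right <|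
      And.imp_right fun hunif h₁ h₂ p hp => hunif h₁ h₂ p (one_pos.trans_le hp)⟩
end

section
/- Let α = (α_1,…,α_d) be a multi-index with α_i ∈ (0,2]∖{1}, let κ > 0, T > 0, η ∈ (0,1), and let μ be a nonnegative measure on ℝ^d satisfying (H_η^α). Then for every β ∈ (0, (1−η)/2), ∫_0^T ∫_{ℝ^d} exp(−2rκ S_α(ξ)) (S_α(ξ))^{2β} μ(dξ) dr < ∞. -/
open MeasureTheory

/-- `S_α(ξ) = ∑ i |ξ_i|^{α_i}`. -/
noncomputable def Sa {d : ℕ} (α : Fin d → ℝ) (ξ : Fin d → ℝ) : ℝ :=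
  ∑ i, |ξ i| ^ (α i)

/-!
By Tonelli, integrate in time first. For `s ≥ 0` the integral of `exp (-2κsr)` over `0 < r ≤ T` is
at most both `T` and `1 / (2κs)`, hence at most `(T + 1 / (2κ)) / (1 + s)`. Multiplied by `s ^ (2β)`
this is at most a constant times `(1 + s) ^ (2β - 1)`, hence times `(1 + s) ^ (-η)` since
`2β + η ≤ 1`. Tonelli applies because a measure for which some
positive function has finite integral is s-finite.
-/

theorem sFinite_of_lintegral_ne_top {X : Type*} [MeasurableSpace X] {μ : Measure X}
    {f : X → ENNReal} (hf : AEMeasurable f μ) (hf_pos : ∀ᵐ x ∂μ, f x ≠ 0)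
    (hf_int : ∫⁻ x, f x ∂μ ≠ ⊤) : SFinite μ := by
  have hf_fin : ∀ᵐ x ∂μ, f x ≠ ⊤ := (ae_lt_top' hf hf_int).mono fun _ hx => hx.ne
  have : IsFiniteMeasure (μ.withDensity f) := isFiniteMeasure_withDensity hf_int
  rw [← withDensity_inv_same₀ hf hf_pos hf_fin]
  infer_instance

theorem mul_integral_exp_neg_mul_le_one (a T : ℝ) :
    a * ∫ r in (0 : ℝ)..T, Real.exp (-a * r) ≤ 1 := by
  have h : -a * ∫ r in (0 : ℝ)..T, Real.exp (-a * r) = Real.exp (-a * T) - 1 := by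
    rw [intervalIntegral.mul_integral_comp_mul_left, integral_exp, mul_zero, Real.exp_zero]
  linarith [Real.exp_pos (-a * T)]

theorem integral_exp_neg_mul_le {a T : ℝ} (ha : 0 ≤ a) (hT : 0 ≤ T) :
    ∫ r in (0 : ℝ)..T, Real.exp (-a * r) ≤ T := by
  calc ∫ r in (0 : ℝ)..T, Real.exp (-a * r) ≤ ∫ _ in (0 : ℝ)..T, (1 : ℝ) := by
        refine intervalIntegral.integral_mono_on hT
          (Continuous.intervalIntegrable (by fun_prop) _ _) intervalIntegrable_const
          fun r hr => Real.exp_le_one_iff.mpr ?_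
        exact mul_nonpos_of_nonpos_of_nonneg (neg_nonpos.mpr ha) hr.1
    _ = T := by simp

theorem integral_exp_neg_mul_le_div_one_add {c s T : ℝ} (hc : 0 < c) (hs : 0 ≤ s) (hT : 0 ≤ T) :
    ∫ r in (0 : ℝ)..T, Real.exp (-(c * s) * r) ≤ (T + 1 / c) / (1 + s) := by
  set I := ∫ r in (0 : ℝ)..T, Real.exp (-(c * s) * r)
  have hI : I ≤ T := integral_exp_neg_mul_le (by positivity) hT
  have hsI : s * I ≤ 1 / c := by
    rw [le_div_iff₀' hc, ← mul_assoc]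
    exact mul_integral_exp_neg_mul_le_one (c * s) T
  rw [le_div_iff₀' (by positivity)]
  linarith

theorem rpow_div_one_add_le {s p η : ℝ} (hs : 0 ≤ s) (hp : 0 ≤ p) (hpη : p + η ≤ 1) :
    s ^ p / (1 + s) ≤ (1 + s) ^ (-η) := by
  calc s ^ p / (1 + s) ≤ (1 + s) ^ p / (1 + s) := by gcongr; linarith
    _ = (1 + s) ^ (p - 1) := (Real.rpow_sub_one (by positivity) p).symm
    _ ≤ (1 + s) ^ (-η) := Real.rpow_le_rpow_of_exponent_le (by linarith) (by linarith)

theorem setLIntegral_exp_neg_mul_mul_rpow_le {c s T p η : ℝ} (hc : 0 < c) (hs : 0 ≤ s)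
    (hT : 0 ≤ T) (hp : 0 ≤ p) (hpη : p + η ≤ 1) :
    ∫⁻ r in Set.Ioc 0 T, ENNReal.ofReal (Real.exp (-(c * s) * r) * s ^ p) ≤
      ENNReal.ofReal ((T + 1 / c) * (1 + s) ^ (-η)) := by
  have hint : IntervalIntegrable (fun r => Real.exp (-(c * s) * r) * s ^ p) volume 0 T :=
    Continuous.intervalIntegrable (by fun_prop) _ _
  rw [← ofReal_integral_eq_lintegral_ofReal hint.1 (.of_forall fun r => by positivity),
    ← intervalIntegral.integral_of_le hT, intervalIntegral.integral_mul_const]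
  refine ENNReal.ofReal_le_ofReal ?_
  calc (∫ r in (0 : ℝ)..T, Real.exp (-(c * s) * r)) * s ^ p
      ≤ (T + 1 / c) / (1 + s) * s ^ p := by
        gcongr
        exact integral_exp_neg_mul_le_div_one_add hc hs hT
    _ = (T + 1 / c) * (s ^ p / (1 + s)) := by ring
    _ ≤ (T + 1 / c) * (1 + s) ^ (-η) := by
        gcongr
        exact rpow_div_one_add_le hs hp hpη

theorem stmt11_general {X : Type*} [MeasurableSpace X] {μ : Measure X} {S : X → ℝ}
    (hS : AEMeasurable S μ) (hS_nonneg : 0 ≤ᵐ[μ] S) {κ T η β : ℝ} (hκ : 0 < κ) (hT : 0 ≤ T)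
    (hμ : ∫⁻ x, ENNReal.ofReal ((1 + S x) ^ (-η)) ∂μ < ⊤)
    (hβ : 0 ≤ β) (hβη : 2 * β + η ≤ 1) :
    ∫⁻ r in Set.Ioc (0 : ℝ) T,
      ∫⁻ x, ENNReal.ofReal (Real.exp (-(2 * r * κ * S x)) * S x ^ (2 * β)) ∂μ < ⊤ := by
  have hweight_pos : ∀ᵐ x ∂μ, ENNReal.ofReal ((1 + S x) ^ (-η)) ≠ 0 := by
    filter_upwards [hS_nonneg] with x (hx : 0 ≤ S x)
    exact (ENNReal.ofReal_pos.mpr (by positivity)).ne'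
  have : SFinite μ := sFinite_of_lintegral_ne_top (by fun_prop) hweight_pos hμ.ne
  calc ∫⁻ r in Set.Ioc (0 : ℝ) T,
        ∫⁻ x, ENNReal.ofReal (Real.exp (-(2 * r * κ * S x)) * S x ^ (2 * β)) ∂μ
      = ∫⁻ x, (∫⁻ r in Set.Ioc (0 : ℝ) T,
          ENNReal.ofReal (Real.exp (-(2 * κ * S x) * r) * S x ^ (2 * β))) ∂μ := by
        rw [lintegral_lintegral_swap (by unfold Function.uncurry; fun_prop)]
        refine lintegral_congr fun x => lintegral_congr fun r => ?_
        ring_nf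
    _ ≤ ∫⁻ x, ENNReal.ofReal ((T + 1 / (2 * κ)) * (1 + S x) ^ (-η)) ∂μ := by
        refine lintegral_mono_ae ?_
        filter_upwards [hS_nonneg] with x hx
        exact setLIntegral_exp_neg_mul_mul_rpow_le (by positivity) hx hT (by positivity) hβη
    _ = ENNReal.ofReal (T + 1 / (2 * κ)) * ∫⁻ x, ENNReal.ofReal ((1 + S x) ^ (-η)) ∂μ := by
        simp_rw [ENNReal.ofReal_mul (show 0 ≤ T + 1 / (2 * κ) by positivity)]
        exact lintegral_const_mul' _ _ ENNReal.ofReal_ne_top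
    _ < ⊤ := ENNReal.mul_lt_top ENNReal.ofReal_lt_top hμ

theorem Sa_nonneg {d : ℕ} (α ξ : Fin d → ℝ) : 0 ≤ Sa α ξ :=
  Finset.sum_nonneg fun _ _ => Real.rpow_nonneg (abs_nonneg _) _

theorem measurable_Sa {d : ℕ} (α : Fin d → ℝ) : Measurable (Sa α) := by
  unfold Sa
  fun_prop

theorem stmt11 {d : ℕ} (hd : 0 < d) (α : Fin d → ℝ)
    (hα : ∀ i, 0 < α i ∧ α i ≤ 2 ∧ α i ≠ 1)
    (κ T η : ℝ) (hκ : 0 < κ) (hT : 0 < T) (hη : η ∈ Set.Ioo (0 : ℝ) 1)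
    (μ : Measure (Fin d → ℝ))
    (hμ : (∫⁻ ξ, ENNReal.ofReal ((1 + Sa α ξ) ^ (-η)) ∂μ) < ⊤)
    (β : ℝ) (hβ : β ∈ Set.Ioo (0 : ℝ) ((1 - η) / 2)) :
    (∫⁻ r in Set.Ioc (0 : ℝ) T,
      ∫⁻ ξ, ENNReal.ofReal (Real.exp (-(2 * r * κ * Sa α ξ)) * Sa α ξ ^ (2 * β)) ∂μ) < ⊤ :=
  stmt11_general (measurable_Sa α).aemeasurable (.of_forall (Sa_nonneg α)) hκ hT.le hμ
    hβ.1.le (by linarith [hβ.2])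
end
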